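/- arXiv:2202.14022 — 4 statements merged into one kernel-verified Lean document; each statement's English description precedes it below -/
import Mathlib

section
/- Let X be an infinite set, ℱ a non-principal ultrafilter on X, A a ring of finite cardinality, and (M_α)_{α∈X}, (N_α)_{α∈X} bounded families of A-modules. Then the natural map (∏_{α∈X} Hom_A(M_α, N_α))_ℱ → Hom_A((∏_{α∈X} M_α)_ℱ, (∏_{α∈X} N_α)_ℱ), sending the class of a family of homomorphisms (f_α) to the homomorphism it induces on ultraproducts, is an isomorphism of A-modules. -/
open Filter

section Ultra

variable {X : Type*} (ℱ : Ultrafilter X) (A : Type*) [Ring A]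

/-- The submodule of families vanishing on a set of the ultrafilter. -/
def ultraZero (M : X → Type*) [∀ α, AddCommGroup (M α)] [∀ α, Module A (M α)] :
    Submodule A (∀ α, M α) where
  carrier := {x | ∀ᶠ α in (ℱ : Filter X), x α = 0}
  add_mem' := by
    intro a b ha hb
    filter_upwards [ha, hb] with α h1 h2
    simp [h1, h2]
  zero_mem' := Filter.Eventually.of_forall fun _ => rfl
  smul_mem' := by
    intro c x hx
    filter_upwards [hx] with α h
    simp [h]

lemma mem_ultraZero {M : X → Type*} [∀ α, AddCommGroup (M α)] [∀ α, Module A (M α)]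
    {x : ∀ α, M α} :
    x ∈ ultraZero ℱ A M ↔ ∀ᶠ α in (ℱ : Filter X), x α = 0 := Iff.rfl

/-- The ultraproduct of a family of `A`-modules along the ultrafilter `ℱ`. -/
abbrev Ultraproduct (M : X → Type*) [∀ α, AddCommGroup (M α)] [∀ α, Module A (M α)] :=
  (∀ α, M α) ⧸ ultraZero ℱ A M

/-- The map induced on ultraproducts by a family of linear maps. -/
def ultraMap {M N : X → Type*} [∀ α, AddCommGroup (M α)] [∀ α, Module A (M α)]
    [∀ α, AddCommGroup (N α)] [∀ α, Module A (N α)] (f : ∀ α, M α →ₗ[A] N α) :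
    Ultraproduct ℱ A M →ₗ[A] Ultraproduct ℱ A N :=
  Submodule.mapQ _ _ (LinearMap.pi fun α => (f α).comp (LinearMap.proj α)) <| by
    intro x hx
    simp only [Submodule.mem_comap]
    rw [mem_ultraZero]
    filter_upwards [hx] with α h
    simp [h]

lemma ultraMap_mk {M N : X → Type*} [∀ α, AddCommGroup (M α)] [∀ α, Module A (M α)]
    [∀ α, AddCommGroup (N α)] [∀ α, Module A (N α)] (f : ∀ α, M α →ₗ[A] N α)
    (x : ∀ α, M α) :
    ultraMap ℱ A f (Submodule.Quotient.mk x) =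
      Submodule.Quotient.mk (fun α => f α (x α)) := by
  simp [ultraMap, Submodule.mapQ_apply]
  rfl

end Ultra

section HomUltra

variable {X : Type*} (ℱ : Ultrafilter X) (A : Type*) [CommRing A]
variable (M N : X → Type*) [∀ α, AddCommGroup (M α)] [∀ α, Module A (M α)]
  [∀ α, AddCommGroup (N α)] [∀ α, Module A (N α)]

/-- The natural map from the ultraproduct of the modules of homomorphisms to the module of
homomorphisms between the ultraproducts. -/
def homUltraMap :
    Ultraproduct ℱ A (fun α => M α →ₗ[A] N α) →ₗ[A]
      (Ultraproduct ℱ A M →ₗ[A] Ultraproduct ℱ A N) :=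
  Submodule.liftQ _
    { toFun := fun f => ultraMap ℱ A f
      map_add' := fun f g => by
        refine LinearMap.ext fun u => ?_
        obtain ⟨x, rfl⟩ := Submodule.Quotient.mk_surjective _ u
        simp only [LinearMap.add_apply, ultraMap_mk, ← Submodule.Quotient.mk_add]
        rfl
      map_smul' := fun c f => by
        refine LinearMap.ext fun u => ?_
        obtain ⟨x, rfl⟩ := Submodule.Quotient.mk_surjective _ u
        simp only [RingHom.id_apply, LinearMap.smul_apply, ultraMap_mk,
          ← Submodule.Quotient.mk_smul]
        rfl }
    (by
      intro f hf
      simp only [LinearMap.mem_ker, LinearMap.coe_mk, AddHom.coe_mk]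
      refine LinearMap.ext fun u => ?_
      obtain ⟨x, rfl⟩ := Submodule.Quotient.mk_surjective _ u
      rw [ultraMap_mk]
      simp only [LinearMap.zero_apply]
      rw [Submodule.Quotient.mk_eq_zero, mem_ultraZero]
      filter_upwards [hf] with α h
      rw [h]
      rfl)

end HomUltra

/-- For bounded families of modules over a finite ring, the natural map from
the ultraproduct of the modules of homomorphisms to the module of homomorphisms between the
ultraproducts is an isomorphism. -/
theorem homUltraMap_bijective
    {X : Type*} [Infinite X] (ℱ : Ultrafilter X) (hℱ : ∀ x : X, ℱ ≠ pure x)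
    (A : Type*) [CommRing A] [Finite A]
    (M N : X → Type*) [∀ α, AddCommGroup (M α)] [∀ α, Module A (M α)]
    [∀ α, AddCommGroup (N α)] [∀ α, Module A (N α)]
    (s : ℕ) (hMbdd : ∀ α, ∃ f : (Fin s → A) →ₗ[A] M α, Function.Surjective f)
    (hNbdd : ∀ α, ∃ f : (Fin s → A) →ₗ[A] N α, Function.Surjective f) :
    Function.Bijective (homUltraMap ℱ A M N) := by
  classical
  constructor
  · rw [injective_iff_map_eq_zero]
    intro u hu
    obtain ⟨f, rfl⟩ := Submodule.Quotient.mk_surjective _ u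
    have hu : ultraMap ℱ A f = 0 := hu
    have hx : ∀ α, ∃ x : M α, f α x = 0 → f α = 0 := by
      intro α
      by_cases h : f α = 0
      · exact ⟨0, fun _ => h⟩
      · obtain ⟨x, hx⟩ : ∃ x, f α x ≠ 0 := by
          by_contra! h'
          exact h (LinearMap.ext h')
        exact ⟨x, fun h0 => absurd h0 hx⟩
    choose x hx using hx
    have h1 := ultraMap_mk ℱ A f x
    rw [hu, LinearMap.zero_apply, eq_comm, Submodule.Quotient.mk_eq_zero, mem_ultraZero] at h1
    rw [Submodule.Quotient.mk_eq_zero, mem_ultraZero]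
    filter_upwards [h1] with α h
    exact hx α h
  · intro φ
    choose p hp using hMbdd
    have hn : ∀ v : Fin s → A, ∃ n : ∀ α, N α,
        (Submodule.Quotient.mk n : Ultraproduct ℱ A N) =
          φ (Submodule.Quotient.mk fun α => p α v) :=
      fun v => Submodule.Quotient.mk_surjective _ _
    choose n hn using hn
    have key : ∀ a b : ∀ α, N α,
        (Submodule.Quotient.mk a : Ultraproduct ℱ A N) = Submodule.Quotient.mk b ↔
          ∀ᶠ α in (ℱ : Filter X), a α = b α := by
      intro a b
      rw [Submodule.Quotient.eq, mem_ultraZero]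
      simp only [Pi.sub_apply, sub_eq_zero]
    have keyM : ∀ a b : ∀ α, M α,
        (Submodule.Quotient.mk a : Ultraproduct ℱ A M) = Submodule.Quotient.mk b ↔
          ∀ᶠ α in (ℱ : Filter X), a α = b α := by
      intro a b
      rw [Submodule.Quotient.eq, mem_ultraZero]
      simp only [Pi.sub_apply, sub_eq_zero]
    have hadd : ∀ᶠ α in (ℱ : Filter X), ∀ v w, n (v + w) α = n v α + n w α := by
      rw [eventually_all]; intro v
      rw [eventually_all]; intro w
      refine (key (n (v + w)) (n v + n w)).1 ?_
      rw [Submodule.Quotient.mk_add, hn, hn, hn, ← map_add, ← Submodule.Quotient.mk_add]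
      congr 2
      funext α
      exact map_add _ _ _
    have hsmul : ∀ᶠ α in (ℱ : Filter X), ∀ (c : A) v, n (c • v) α = c • n v α := by
      rw [eventually_all]; intro c
      rw [eventually_all]; intro v
      refine (key (n (c • v)) (c • n v)).1 ?_
      rw [Submodule.Quotient.mk_smul, hn, hn, ← map_smul, ← Submodule.Quotient.mk_smul]
      congr 2
      funext α
      exact map_smul _ _ _
    have hwd : ∀ᶠ α in (ℱ : Filter X), ∀ v w, p α v = p α w → n v α = n w α := by
      rw [eventually_all]; intro v
      rw [eventually_all]; intro w
      rw [Ultrafilter.eventually_imp]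
      intro h
      refine (key (n v) (n w)).1 ?_
      rw [hn, hn, (keyM _ _).2 h]
    have hf : ∀ α, ∃ f : M α →ₗ[A] N α,
        ((∀ v w, n (v + w) α = n v α + n w α) ∧ (∀ (c : A) v, n (c • v) α = c • n v α) ∧
          (∀ v w, p α v = p α w → n v α = n w α)) → ∀ v, f (p α v) = n v α := by
      intro α
      by_cases h : ((∀ v w, n (v + w) α = n v α + n w α) ∧
          (∀ (c : A) v, n (c • v) α = c • n v α) ∧ (∀ v w, p α v = p α w → n v α = n w α))
      · obtain ⟨h1, h2, h3⟩ := h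
        have hs := Function.surjInv_eq (hp α)
        refine ⟨{ toFun := fun m => n (Function.surjInv (hp α) m) α
                  map_add' := fun a b => ?_
                  map_smul' := fun c a => ?_ }, fun _ v => ?_⟩
        · rw [← h1]; apply h3; rw [map_add, hs, hs, hs]
        · rw [RingHom.id_apply, ← h2]; apply h3; rw [map_smul, hs, hs]
        · exact h3 _ _ (hs _)
      · exact ⟨0, fun h' => absurd h' h⟩
    choose f hf using hf
    refine ⟨Submodule.Quotient.mk f, ?_⟩
    change ultraMap ℱ A f = φ
    refine LinearMap.ext fun u => ?_
    obtain ⟨x, rfl⟩ := Submodule.Quotient.mk_surjective _ u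
    have hv : ∃ v, ∀ᶠ α in (ℱ : Filter X), x α = p α v := by
      rw [← Ultrafilter.eventually_exists_iff]
      exact Eventually.of_forall fun α => (hp α (x α)).imp fun _ h => h.symm
    obtain ⟨v, hv⟩ := hv
    rw [(keyM x fun α => p α v).2 hv, ultraMap_mk, ← hn, key]
    filter_upwards [hadd, hsmul, hwd] with α h1 h2 h3
    exact hf α ⟨h1, h2, h3⟩ v
end

section
/- Let R be a complete Noetherian local ring with maximal ideal 𝔪 and finite residue field, X an infinite set, ℱ a non-principal ultrafilter on X, and (M_α)_{α∈X}, (N_α)_{α∈X} bounded families of R-modules. Then there is a natural isomorphism of R-modules Hom_R(Patch_R((M_α)), Patch_R((N_α))) ≅ lim_n (∏_{α∈X} Hom_R(M_α/𝔪^n M_α, N_α/𝔪^n N_α))_ℱ. -/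
open Filter IsLocalRing

section SeqLimit

variable (R : Type*) [CommRing R]

/-- The inverse limit of a sequence of modules, realised as a submodule of the product. -/
def seqLimit (P : ℕ → Type*) [∀ n, AddCommGroup (P n)] [∀ n, Module R (P n)]
    (g : ∀ n, P (n + 1) →ₗ[R] P n) : Submodule R (∀ n, P n) where
  carrier := {x | ∀ n, g n (x (n + 1)) = x n}
  add_mem' := by
    intro a b ha hb n
    simp [ha n, hb n]
  zero_mem' := by intro n; simp
  smul_mem' := by
    intro c x hx n
    simp [hx n]

end SeqLimit

section Patch

variable (R : Type*) [CommRing R] [IsLocalRing R]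

/-- The submodule 𝔪ⁿ•M of a module M. -/
abbrev mPow (n : ℕ) (M : Type*) [AddCommGroup M] [Module R M] : Submodule R M :=
  (maximalIdeal R ^ n) • (⊤ : Submodule R M)

/-- The quotient M/𝔪ⁿM. -/
abbrev ModQuot (n : ℕ) (M : Type*) [AddCommGroup M] [Module R M] :=
  M ⧸ mPow R n M

lemma mPow_succ_le (n : ℕ) (M : Type*) [AddCommGroup M] [Module R M] :
    mPow R (n + 1) M ≤ mPow R n M :=
  Submodule.smul_mono_left (Ideal.pow_le_pow_right n.le_succ)

/-- The reduction map M/𝔪ⁿ⁺¹M → M/𝔪ⁿM. -/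
def quotTrans (n : ℕ) (M : Type*) [AddCommGroup M] [Module R M] :
    ModQuot R (n + 1) M →ₗ[R] ModQuot R n M :=
  Submodule.mapQ _ _ LinearMap.id <| by
    intro x hx
    simpa using mPow_succ_le R n M hx

lemma quotTrans_mk (n : ℕ) (M : Type*) [AddCommGroup M] [Module R M] (x : M) :
    quotTrans R n M (Submodule.Quotient.mk x) = Submodule.Quotient.mk x := by
  simp [quotTrans, Submodule.mapQ_apply]

variable {X : Type*} (ℱ : Ultrafilter X)

/-- The n-th level of the patching construction: the ultraproduct of the quotients M α/𝔪ⁿ. -/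
abbrev UP (M : X → Type*) [∀ α, AddCommGroup (M α)] [∀ α, Module R (M α)] (n : ℕ) :=
  Ultraproduct ℱ R (fun α => ModQuot R n (M α))

/-- The transition maps between the levels of the patching construction. -/
def upTrans (M : X → Type*) [∀ α, AddCommGroup (M α)] [∀ α, Module R (M α)] (n : ℕ) :
    UP R ℱ M (n + 1) →ₗ[R] UP R ℱ M n :=
  ultraMap ℱ R (fun α => quotTrans R n (M α))

/-- The patching module of a family of R-modules: the inverse limit over n of the
ultraproducts of the quotients M α/𝔪ⁿ. -/
def PatchS (M : X → Type*) [∀ α, AddCommGroup (M α)] [∀ α, Module R (M α)] :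
    Submodule R (∀ n, UP R ℱ M n) :=
  seqLimit R (fun n => UP R ℱ M n) (fun n => upTrans R ℱ M n)

lemma mem_PatchS {M : X → Type*} [∀ α, AddCommGroup (M α)] [∀ α, Module R (M α)]
    {x : ∀ n, UP R ℱ M n} :
    x ∈ PatchS R ℱ M ↔ ∀ n, upTrans R ℱ M n (x (n + 1)) = x n := Iff.rfl

-- functoriality of ModQuot
lemma mapQ_cond {M N : Type*} [AddCommGroup M] [Module R M] [AddCommGroup N] [Module R N]
    (f : M →ₗ[R] N) (n : ℕ) : mPow R n M ≤ (mPow R n N).comap f := by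
  rw [← Submodule.map_le_iff_le_comap, Submodule.map_smul'']
  exact Submodule.smul_mono le_rfl le_top

/-- The map induced by f : M →ₗ N on the quotients modulo 𝔪ⁿ. -/
def modQuotMap (n : ℕ) {M N : Type*} [AddCommGroup M] [Module R M] [AddCommGroup N]
    [Module R N] (f : M →ₗ[R] N) : ModQuot R n M →ₗ[R] ModQuot R n N :=
  Submodule.mapQ _ _ f (mapQ_cond R f n)

lemma modQuotMap_mk (n : ℕ) {M N : Type*} [AddCommGroup M] [Module R M] [AddCommGroup N]
    [Module R N] (f : M →ₗ[R] N) (x : M) :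
    modQuotMap R n f (Submodule.Quotient.mk x) = Submodule.Quotient.mk (f x) := by
  simp [modQuotMap, Submodule.mapQ_apply]

lemma quotTrans_modQuotMap {M N : Type*} [AddCommGroup M] [Module R M] [AddCommGroup N]
    [Module R N] (f : M →ₗ[R] N) (n : ℕ) (q : ModQuot R (n + 1) M) :
    quotTrans R n N (modQuotMap R (n + 1) f q) = modQuotMap R n f (quotTrans R n M q) := by
  obtain ⟨z, rfl⟩ := Submodule.Quotient.mk_surjective _ q
  rw [modQuotMap_mk, quotTrans_mk, quotTrans_mk, modQuotMap_mk]

lemma level_compat {M N : X → Type*} [∀ α, AddCommGroup (M α)] [∀ α, Module R (M α)]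
    [∀ α, AddCommGroup (N α)] [∀ α, Module R (N α)] (f : ∀ α, M α →ₗ[R] N α) (n : ℕ)
    (u : UP R ℱ M (n + 1)) :
    upTrans R ℱ N n (ultraMap ℱ R (fun α => modQuotMap R (n + 1) (f α)) u) =
      ultraMap ℱ R (fun α => modQuotMap R n (f α)) (upTrans R ℱ M n u) := by
  obtain ⟨y, rfl⟩ := Submodule.Quotient.mk_surjective _ u
  simp only [upTrans]
  rw [ultraMap_mk, ultraMap_mk, ultraMap_mk, ultraMap_mk]
  exact congrArg _ (funext fun α => quotTrans_modQuotMap R (f α) n (y α))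

/-- The map induced on patching modules by a family of linear maps. -/
def patchMap {M N : X → Type*} [∀ α, AddCommGroup (M α)] [∀ α, Module R (M α)]
    [∀ α, AddCommGroup (N α)] [∀ α, Module R (N α)] (f : ∀ α, M α →ₗ[R] N α) :
    ↥(PatchS R ℱ M) →ₗ[R] ↥(PatchS R ℱ N) :=
  LinearMap.codRestrict _
    ((LinearMap.pi fun n =>
        (ultraMap ℱ R fun α => modQuotMap R n (f α)).comp (LinearMap.proj n)).comp
      (PatchS R ℱ M).subtype)
    (by
      intro x
      rw [mem_PatchS]
      intro n
      simp only [LinearMap.comp_apply, LinearMap.pi_apply, LinearMap.proj_apply,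
        Submodule.subtype_apply]
      rw [level_compat, x.2 n])

end Patch

section HomTrans

variable (R : Type*) [CommRing R] [IsLocalRing R]

lemma mPow_le_ker_quotTrans (n : ℕ) (N : Type*) [AddCommGroup N] [Module R N] :
    mPow R n (ModQuot R (n + 1) N) ≤ LinearMap.ker (quotTrans R n N) := by
  have h : mPow R n (ModQuot R (n + 1) N)
      = Submodule.map (mPow R (n + 1) N).mkQ (mPow R n N) := by
    rw [Submodule.map_smul'', Submodule.map_top, Submodule.range_mkQ]
  rw [h]
  rintro _ ⟨y, hy, rfl⟩
  rw [LinearMap.mem_ker, Submodule.mkQ_apply, quotTrans_mk, Submodule.Quotient.mk_eq_zero]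
  exact hy

variable {M N : Type*} [AddCommGroup M] [Module R M] [AddCommGroup N] [Module R N]

lemma homTrans_ker (n : ℕ) (φ : ModQuot R (n + 1) M →ₗ[R] ModQuot R (n + 1) N) :
    mPow R n M ≤ LinearMap.ker ((quotTrans R n N) ∘ₗ (φ ∘ₗ (mPow R (n + 1) M).mkQ)) := by
  intro x hx
  rw [LinearMap.mem_ker, LinearMap.comp_apply, LinearMap.comp_apply]
  have h1 : (mPow R (n + 1) M).mkQ x ∈ mPow R n (ModQuot R (n + 1) M) := by
    have h2 : ((mPow R (n + 1) M).mkQ) x ∈ Submodule.map (mPow R (n + 1) M).mkQ (mPow R n M) :=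
      Submodule.mem_map_of_mem hx
    rwa [Submodule.map_smul'', Submodule.map_top, Submodule.range_mkQ] at h2
  have h3 : φ ((mPow R (n + 1) M).mkQ x) ∈ mPow R n (ModQuot R (n + 1) N) := by
    have h4 := Submodule.mem_map_of_mem (f := φ) h1
    rw [Submodule.map_smul''] at h4
    exact Submodule.smul_mono le_rfl le_top h4
  have h5 := mPow_le_ker_quotTrans R n N h3
  rwa [LinearMap.mem_ker] at h5

/-- The transition map between the modules of homomorphisms of successive quotients. -/
def homTrans (n : ℕ) :
    (ModQuot R (n + 1) M →ₗ[R] ModQuot R (n + 1) N) →ₗ[R]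
      (ModQuot R n M →ₗ[R] ModQuot R n N) where
  toFun φ := Submodule.liftQ _ ((quotTrans R n N) ∘ₗ (φ ∘ₗ (mPow R (n + 1) M).mkQ))
    (homTrans_ker R n φ)
  map_add' φ ψ := by
    refine LinearMap.ext fun q => ?_
    obtain ⟨x, rfl⟩ := Submodule.Quotient.mk_surjective _ q
    simp [Submodule.liftQ_apply]
  map_smul' c φ := by
    refine LinearMap.ext fun q => ?_
    obtain ⟨x, rfl⟩ := Submodule.Quotient.mk_surjective _ q
    simp [Submodule.liftQ_apply]

end HomTrans

section Helpers

variable (R : Type*) [CommRing R] [IsLocalRing R] {X : Type*} (ℱ : Ultrafilter X)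

/-- A family of elements defines an element of the patching module. -/
def patchOf (M : X → Type*) [∀ α, AddCommGroup (M α)] [∀ α, Module R (M α)] :
    (∀ α, M α) →ₗ[R] ↥(PatchS R ℱ M) where
  toFun y := ⟨fun n => Submodule.Quotient.mk (fun α => Submodule.Quotient.mk (y α)), by
    rw [mem_PatchS]
    intro n
    rw [upTrans, ultraMap_mk]
    exact congrArg _ (funext fun α => quotTrans_mk R n (M α) (y α))⟩
  map_add' _ _ := rfl
  map_smul' _ _ := rfl

lemma patchOf_val {M : X → Type*} [∀ α, AddCommGroup (M α)] [∀ α, Module R (M α)]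
    (y : ∀ α, M α) (n : ℕ) :
    (patchOf R ℱ M y).1 n =
      Submodule.Quotient.mk (fun α => Submodule.Quotient.mk (y α)) := rfl

lemma patchOf_eq_zero {M : X → Type*} [∀ α, AddCommGroup (M α)] [∀ α, Module R (M α)]
    (y : ∀ α, M α) (n : ℕ) :
    (patchOf R ℱ M y).1 n = 0 ↔ ∀ᶠ α in (ℱ : Filter X), y α ∈ mPow R n (M α) := by
  rw [patchOf_val, Submodule.Quotient.mk_eq_zero, mem_ultraZero]
  simp only [Submodule.Quotient.mk_eq_zero]

lemma exists_patchOf {M : X → Type*} [∀ α, AddCommGroup (M α)] [∀ α, Module R (M α)]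
    (n : ℕ) (u : UP R ℱ M n) : ∃ y : ∀ α, M α, (patchOf R ℱ M y).1 n = u := by
  obtain ⟨v, rfl⟩ := Submodule.Quotient.mk_surjective _ u
  choose y hy using fun α => Submodule.Quotient.mk_surjective _ (v α)
  exact ⟨y, by rw [patchOf_val]; exact congrArg _ (funext hy)⟩

lemma patch_zero_mono {M : X → Type*} [∀ α, AddCommGroup (M α)] [∀ α, Module R (M α)]
    (x : ↥(PatchS R ℱ M)) {m n : ℕ} (h : m ≤ n) (hx : x.1 n = 0) : x.1 m = 0 := by
  induction n, h using Nat.le_induction with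
  | base => exact hx
  | succ n _ ih =>
    apply ih
    rw [← x.2 n, hx, map_zero]

lemma mem_span_range_smul {M : Type*} [AddCommGroup M] [Module R M] {l : ℕ} (a : Fin l → R)
    (P : Submodule R M) (x : M) (hx : x ∈ (Ideal.span (Set.range a)) • P) :
    ∃ z : Fin l → M, (∀ j, z j ∈ P) ∧ x = ∑ j, a j • z j := by
  induction hx using Submodule.smul_induction_on' with
  | smul r hr y hy =>
    obtain ⟨c, rfl⟩ := (Ideal.mem_span_range_iff_exists_fun).1 hr
    refine ⟨fun j => c j • y, fun j => P.smul_mem _ hy, ?_⟩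
    rw [Finset.sum_smul]
    exact Finset.sum_congr rfl fun j _ => by rw [smul_smul, mul_comm]
  | add x hx y hy h1 h2 =>
    obtain ⟨z, hz, rfl⟩ := h1
    obtain ⟨w, hw, rfl⟩ := h2
    refine ⟨z + w, fun j => P.add_mem (hz j) (hw j), ?_⟩
    simp [smul_add, Finset.sum_add_distrib]

lemma patch_step {M : X → Type*} [∀ α, AddCommGroup (M α)] [∀ α, Module R (M α)]
    {l n : ℕ} (a : Fin l → R) (ha : Ideal.span (Set.range a) = maximalIdeal R ^ n)
    (k : ℕ) (x : ↥(PatchS R ℱ M)) (hx : x.1 (n + k) = 0) :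
    ∃ z : Fin l → ↥(PatchS R ℱ M), (∀ j, (z j).1 k = 0) ∧
      (x - ∑ j, a j • z j).1 (n + k + 1) = 0 := by
  obtain ⟨y, hy⟩ := exists_patchOf R ℱ (n + k + 1) (x.1 (n + k + 1))
  have h0 : (patchOf R ℱ M y).1 (n + k) = 0 := by
    rw [← (patchOf R ℱ M y).2 (n + k), hy, x.2 (n + k), hx]
  rw [patchOf_eq_zero] at h0
  have key : ∀ α, ∃ z : Fin l → M α, (∀ j, z j ∈ mPow R k (M α)) ∧
      (y α ∈ mPow R (n + k) (M α) → y α = ∑ j, a j • z j) := by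
    intro α
    by_cases h : y α ∈ mPow R (n + k) (M α)
    · have h' := h
      rw [mPow, pow_add, Submodule.mul_smul, ← ha] at h'
      obtain ⟨z, hz, hz'⟩ := mem_span_range_smul R a _ _ h'
      exact ⟨z, hz, fun _ => hz'⟩
    · exact ⟨0, fun j => Submodule.zero_mem _, fun h' => absurd h' h⟩
  choose z hz hz' using key
  refine ⟨fun j => patchOf R ℱ M (fun α => z α j), fun j => ?_, ?_⟩
  · rw [patchOf_eq_zero]
    exact Filter.Eventually.of_forall fun α => hz α j
  · have h1 : (x - ∑ j, a j • patchOf R ℱ M (fun α => z α j)).1 (n + k + 1) =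
        (patchOf R ℱ M (y - ∑ j, a j • (fun α => z α j))).1 (n + k + 1) := by
      rw [map_sub, map_sum]
      simp only [map_smul]
      change x.1 (n + k + 1) - _ = (patchOf R ℱ M y).1 (n + k + 1) - _
      rw [hy]
    rw [h1, patchOf_eq_zero]
    filter_upwards [h0] with α h
    have h2 : (y - ∑ j, a j • (fun α => z α j)) α = 0 := by
      rw [Pi.sub_apply, Finset.sum_apply, hz' α h]
      simp
    rw [h2]
    exact Submodule.zero_mem _

lemma submodule_coord {P : ℕ → Type*} [∀ n, AddCommGroup (P n)] [∀ n, Module R (P n)]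
    (S : Submodule R (∀ n, P n)) {l : ℕ} (a : Fin l → R) (x : S) (w : Fin l → S) (m : ℕ) :
    (x - ∑ j, a j • w j).1 m = x.1 m - ∑ j, a j • (w j).1 m := by
  simp

lemma patch_coord {M : X → Type*} [∀ α, AddCommGroup (M α)] [∀ α, Module R (M α)]
    {l : ℕ} (a : Fin l → R) (x : ↥(PatchS R ℱ M)) (w : Fin l → ↥(PatchS R ℱ M)) (m : ℕ) :
    (x - ∑ j, a j • w j).1 m = x.1 m - ∑ j, a j • (w j).1 m := by
  exact submodule_coord R (PatchS R ℱ M) a x w m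

lemma exists_factor {P Q S : Type*} [AddCommGroup P] [Module R P] [AddCommGroup Q] [Module R Q]
    [AddCommGroup S] [Module R S] (p : P →ₗ[R] Q) (hp : Function.Surjective p)
    (q : P →ₗ[R] S) (h : LinearMap.ker p ≤ LinearMap.ker q) :
    ∃ f : Q →ₗ[R] S, ∀ x, f (p x) = q x := by
  refine ⟨(Submodule.liftQ _ q h) ∘ₗ (p.quotKerEquivOfSurjective hp).symm.toLinearMap,
    fun x => ?_⟩
  have : (p.quotKerEquivOfSurjective hp).symm (p x) = Submodule.Quotient.mk x := by
    rw [LinearEquiv.symm_apply_eq]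
    rfl
  simp [this]

lemma patch_ker [IsNoetherianRing R]
    {M : X → Type*} [∀ α, AddCommGroup (M α)] [∀ α, Module R (M α)]
    (n : ℕ) (x : ↥(PatchS R ℱ M)) (hx : x.1 n = 0) :
    x ∈ mPow R n ↥(PatchS R ℱ M) := by
  obtain ⟨l, a, ha⟩ := Submodule.fg_iff_exists_fin_generating_family.1
    (IsNoetherian.noetherian (maximalIdeal R ^ n))
  have step := fun (k : ℕ) (x : {x : ↥(PatchS R ℱ M) // x.1 (n + k) = 0}) =>
    patch_step R ℱ a ha k x.1 x.2
  choose z hz hz' using step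
  let xs : ∀ k : ℕ, {x : ↥(PatchS R ℱ M) // x.1 (n + k) = 0} := fun k =>
    Nat.rec ⟨x, hx⟩ (fun k y => ⟨y.1 - ∑ j, a j • z k y j, hz' k y⟩) k
  have xs_succ : ∀ k, (xs (k + 1)).1 = (xs k).1 - ∑ j, a j • z k (xs k) j := fun k => rfl
  have xs_sum : ∀ k, (xs k).1 = x - ∑ j, a j • ∑ i ∈ Finset.range k, z i (xs i) j := by
    intro k
    induction k with
    | zero =>
      simp only [Finset.range_zero, Finset.sum_empty, smul_zero, Finset.sum_const_zero]
      exact (sub_zero x).symm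
    | succ k ih =>
      rw [xs_succ, ih]
      simp only [Finset.sum_range_succ, smul_add, Finset.sum_add_distrib]
      abel
  let Z : Fin l → ↥(PatchS R ℱ M) := fun j =>
    ⟨fun m => (∑ i ∈ Finset.range m, z i (xs i) j).1 m, by
      rw [mem_PatchS]
      intro m
      rw [(∑ i ∈ Finset.range (m + 1), z i (xs i) j).2 m, Finset.sum_range_succ]
      change (∑ i ∈ Finset.range m, z i (xs i) j).1 m + (z m (xs m) j).1 m = _
      rw [hz, add_zero]⟩
  have hxZ : x = ∑ j, a j • Z j := by
    rw [← sub_eq_zero]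
    ext1
    funext m
    have h1 : (xs m).1.1 m = 0 := patch_zero_mono R ℱ _ (Nat.le_add_left m n) (xs m).2
    rw [xs_sum] at h1
    rw [patch_coord] at h1
    exact (patch_coord R ℱ a x Z m).trans h1
  rw [hxZ]
  refine Submodule.sum_mem _ fun j _ => Submodule.smul_mem_smul ?_ trivial
  rw [← ha]
  exact Submodule.subset_span ⟨j, rfl⟩

/-- Evaluation of an ultraproduct of homomorphisms. -/
def ultraHom {M N : X → Type*} [∀ α, AddCommGroup (M α)] [∀ α, Module R (M α)]
    [∀ α, AddCommGroup (N α)] [∀ α, Module R (N α)] :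
    Ultraproduct ℱ R (fun α => M α →ₗ[R] N α) →ₗ[R]
      (Ultraproduct ℱ R M →ₗ[R] Ultraproduct ℱ R N) :=
  Submodule.liftQ _
    { toFun := fun f => ultraMap ℱ R f
      map_add' := by
        intro f g
        refine LinearMap.ext fun q => ?_
        obtain ⟨x, rfl⟩ := Submodule.Quotient.mk_surjective _ q
        rw [LinearMap.add_apply, ultraMap_mk, ultraMap_mk, ultraMap_mk]
        rfl
      map_smul' := by
        intro c f
        refine LinearMap.ext fun q => ?_
        obtain ⟨x, rfl⟩ := Submodule.Quotient.mk_surjective _ q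
        rw [RingHom.id_apply, LinearMap.smul_apply, ultraMap_mk, ultraMap_mk]
        rfl } (by
    intro f hf
    rw [LinearMap.mem_ker]
    refine LinearMap.ext fun q => ?_
    obtain ⟨x, rfl⟩ := Submodule.Quotient.mk_surjective _ q
    change ultraMap ℱ R f _ = 0
    rw [ultraMap_mk, Submodule.Quotient.mk_eq_zero, mem_ultraZero]
    filter_upwards [hf] with α h
    rw [h]
    rfl)

lemma ultraHom_mk {M N : X → Type*} [∀ α, AddCommGroup (M α)] [∀ α, Module R (M α)]
    [∀ α, AddCommGroup (N α)] [∀ α, Module R (N α)] (f : ∀ α, M α →ₗ[R] N α)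
    (x : ∀ α, M α) :
    ultraHom R ℱ (Submodule.Quotient.mk f) (Submodule.Quotient.mk x) =
      Submodule.Quotient.mk (fun α => f α (x α)) :=
  ultraMap_mk ℱ R f x

lemma ultraHom_injective {M N : X → Type*} [∀ α, AddCommGroup (M α)] [∀ α, Module R (M α)]
    [∀ α, AddCommGroup (N α)] [∀ α, Module R (N α)] {s : ℕ}
    (p : ∀ α, (Fin s → R) →ₗ[R] M α) (hp : ∀ α, Function.Surjective (p α)) :
    Function.Injective (ultraHom R ℱ (M := M) (N := N)) := by
  rw [injective_iff_map_eq_zero]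
  intro u hu
  obtain ⟨f, rfl⟩ := Submodule.Quotient.mk_surjective _ u
  rw [Submodule.Quotient.mk_eq_zero, mem_ultraZero]
  have h1 : ∀ i : Fin s, ∀ᶠ α in (ℱ : Filter X), f α (p α (Pi.single i 1)) = 0 := by
    intro i
    have h2 := ultraHom_mk R ℱ f (fun α => p α (Pi.single i 1))
    rw [hu, LinearMap.zero_apply, eq_comm, Submodule.Quotient.mk_eq_zero, mem_ultraZero] at h2
    exact h2
  filter_upwards [Filter.eventually_all.2 h1] with α h
  have h3 : (f α) ∘ₗ (p α) = 0 := by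
    refine LinearMap.pi_ext' fun i => LinearMap.ext_ring ?_
    simpa using h i
  refine LinearMap.ext fun q => ?_
  obtain ⟨r, rfl⟩ := hp α q
  exact LinearMap.congr_fun h3 r

lemma ultraHom_surjective {M N : X → Type*} [∀ α, AddCommGroup (M α)] [∀ α, Module R (M α)]
    [∀ α, AddCommGroup (N α)] [∀ α, Module R (N α)] {s : ℕ}
    (p : ∀ α, (Fin s → R) →ₗ[R] M α) (hp : ∀ α, Function.Surjective (p α))
    (I : Ideal R) [Finite (R ⧸ I)] (hM : ∀ α, ∀ r ∈ I, ∀ x : M α, r • x = 0)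
    (hN : ∀ α, ∀ r ∈ I, ∀ x : N α, r • x = 0) :
    Function.Surjective (ultraHom R ℱ (M := M) (N := N)) := by
  intro g
  have hy : ∀ i : Fin s, ∃ y : ∀ α, N α, Submodule.Quotient.mk y =
      g (Submodule.Quotient.mk (fun α => p α (Pi.single i 1))) :=
    fun i => Submodule.Quotient.mk_surjective _ _
  choose y hy using hy
  let q : ∀ α, (Fin s → R) →ₗ[R] N α := fun α =>
    Fintype.linearCombination R (fun i => y i α)
  have hq : ∀ α r, q α r = ∑ i, r i • y i α := fun α r => Fintype.linearCombination_apply ..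
  have hpr : ∀ α r, p α r = ∑ i, r i • p α (Pi.single i 1) := by
    intro α r
    conv_lhs => rw [pi_eq_sum_univ' r]
    simp [map_sum, map_smul]
  -- `g` on constants
  have hgq : ∀ r : Fin s → R, g (Submodule.Quotient.mk (fun α => p α r)) =
      Submodule.Quotient.mk (fun α => q α r) := by
    intro r
    have e1 : (fun α => p α r) = ∑ i, r i • (fun α => p α (Pi.single i 1)) := by
      funext α
      rw [hpr, Finset.sum_apply]
      rfl
    have e2 : (fun α => q α r) = ∑ i, r i • y i := by
      funext α
      rw [hq, Finset.sum_apply]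
      rfl
    rw [e1, e2, ← Submodule.mkQ_apply, ← Submodule.mkQ_apply, map_sum, map_sum, map_sum]
    refine Finset.sum_congr rfl fun i _ => ?_
    rw [map_smul, map_smul, map_smul, Submodule.mkQ_apply, Submodule.mkQ_apply, hy]
  have hev : ∀ r : Fin s → R, ∀ᶠ α in (ℱ : Filter X), p α r = 0 → q α r = 0 := by
    intro r
    by_cases h : ∀ᶠ α in (ℱ : Filter X), p α r = 0
    · have h1 := hgq r
      rw [(Submodule.Quotient.mk_eq_zero _).2 (show (fun α => p α r) ∈ ultraZero ℱ R M from h),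
        map_zero, eq_comm, Submodule.Quotient.mk_eq_zero, mem_ultraZero] at h1
      filter_upwards [h1] with α h2 _ using h2
    · filter_upwards [Ultrafilter.eventually_not.2 h] with α h2 h3 using absurd h3 h2
  have hfin : ∀ᶠ α in (ℱ : Filter X), ∀ t : Fin s → R ⧸ I,
      p α (fun i => (t i).out) = 0 → q α (fun i => (t i).out) = 0 :=
    Filter.eventually_all.2 fun t => hev _
  have hker : ∀ᶠ α in (ℱ : Filter X), LinearMap.ker (p α) ≤ LinearMap.ker (q α) := by
    filter_upwards [hfin] with α h r hr
    have hd : ∀ i, r i - (Ideal.Quotient.mk I (r i)).out ∈ I := by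
      intro i
      rw [← Ideal.Quotient.eq]
      exact (Quotient.out_eq _).symm
    have h1 : p α r = p α (fun i => (Ideal.Quotient.mk I (r i)).out) := by
      rw [← sub_eq_zero, ← map_sub, hpr]
      exact Finset.sum_eq_zero fun i _ => hM α _ (hd i) _
    have h2 : q α r = q α (fun i => (Ideal.Quotient.mk I (r i)).out) := by
      rw [← sub_eq_zero, ← map_sub, hq]
      exact Finset.sum_eq_zero fun i _ => hN α _ (hd i) _
    rw [LinearMap.mem_ker] at hr ⊢
    rw [h2]
    exact h (fun i => Ideal.Quotient.mk I (r i)) (h1 ▸ hr)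
  have hex : ∀ α, ∃ f : M α →ₗ[R] N α,
      LinearMap.ker (p α) ≤ LinearMap.ker (q α) → f ∘ₗ p α = q α := by
    intro α
    by_cases h : LinearMap.ker (p α) ≤ LinearMap.ker (q α)
    · obtain ⟨f, hf⟩ := exists_factor R (p α) (hp α) (q α) h
      exact ⟨f, fun _ => LinearMap.ext hf⟩
    · exact ⟨0, fun h' => absurd h' h⟩
  choose f hf using hex
  refine ⟨Submodule.Quotient.mk f, LinearMap.ext fun u => ?_⟩
  obtain ⟨x, rfl⟩ := Submodule.Quotient.mk_surjective _ u
  -- any element of the ultraproduct is constant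
  choose r hr using fun α => hp α (x α)
  let t : X → (Fin s → R ⧸ I) := fun α i => Ideal.Quotient.mk I (r α i)
  obtain ⟨t0, ht0⟩ : ∃ t0, ∀ᶠ α in (ℱ : Filter X), t α = t0 := by
    by_contra hcon
    push Not at hcon
    have : ∀ᶠ α in (ℱ : Filter X), ∀ t0, ¬ t α = t0 :=
      Filter.eventually_all.2 fun t0 => hcon t0
    obtain ⟨α, hα⟩ := this.exists
    exact hα _ rfl
  have hx : (Submodule.Quotient.mk x : Ultraproduct ℱ R M) =
      Submodule.Quotient.mk (fun α => p α (fun i => (t0 i).out)) := by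
    rw [Submodule.Quotient.eq, mem_ultraZero]
    filter_upwards [ht0] with α h
    change x α - p α (fun i => (t0 i).out) = 0
    rw [← hr, ← map_sub, hpr]
    refine Finset.sum_eq_zero fun i _ => hM α _ ?_ _
    change r α i - (t0 i).out ∈ I
    rw [← Ideal.Quotient.eq, ← h]
    exact (Quotient.out_eq _).symm
  rw [hx, ultraHom_mk, hgq, Submodule.Quotient.eq, mem_ultraZero]
  filter_upwards [hker] with α h
  change f α (p α _) - q α _ = 0
  rw [sub_eq_zero]
  exact LinearMap.congr_fun (hf α h) _

lemma homTrans_apply {M N : Type*} [AddCommGroup M] [Module R M] [AddCommGroup N] [Module R N]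
    (n : ℕ) (φ : ModQuot R (n + 1) M →ₗ[R] ModQuot R (n + 1) N) (q : ModQuot R (n + 1) M) :
    homTrans R n φ (quotTrans R n M q) = quotTrans R n N (φ q) := by
  obtain ⟨x, rfl⟩ := Submodule.Quotient.mk_surjective _ q
  rw [quotTrans_mk]
  rfl

lemma ultraHom_compat {M N : X → Type*} [∀ α, AddCommGroup (M α)] [∀ α, Module R (M α)]
    [∀ α, AddCommGroup (N α)] [∀ α, Module R (N α)] (n : ℕ)
    (φ : Ultraproduct ℱ R (fun α => ModQuot R (n + 1) (M α) →ₗ[R] ModQuot R (n + 1) (N α)))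
    (u : UP R ℱ M (n + 1)) :
    ultraHom R ℱ (ultraMap ℱ R (fun α => homTrans R (M := M α) (N := N α) n) φ)
      (upTrans R ℱ M n u) = upTrans R ℱ N n (ultraHom R ℱ φ u) := by
  obtain ⟨f, rfl⟩ := Submodule.Quotient.mk_surjective _ φ
  obtain ⟨x, rfl⟩ := Submodule.Quotient.mk_surjective _ u
  rw [upTrans, upTrans, ultraMap_mk, ultraMap_mk, ultraHom_mk, ultraHom_mk, ultraMap_mk]
  exact congrArg _ (funext fun α => homTrans_apply R n (f α) (x α))

lemma smul_modQuot {M : Type*} [AddCommGroup M] [Module R M] (n : ℕ) (r : R)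
    (hr : r ∈ maximalIdeal R ^ n) (q : ModQuot R n M) : r • q = 0 := by
  obtain ⟨x, rfl⟩ := Submodule.Quotient.mk_surjective _ q
  rw [← Submodule.Quotient.mk_smul, Submodule.Quotient.mk_eq_zero]
  exact Submodule.smul_mem_smul hr trivial

/-- Level-wise evaluation, from the limit of the homomorphisms to the homomorphisms of the
patching modules. -/
def limToHom (M N : X → Type*) [∀ α, AddCommGroup (M α)] [∀ α, Module R (M α)]
    [∀ α, AddCommGroup (N α)] [∀ α, Module R (N α)] :
    ↥(seqLimit R
        (fun n => Ultraproduct ℱ R (fun α => ModQuot R n (M α) →ₗ[R] ModQuot R n (N α)))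
        (fun n => ultraMap ℱ R (fun α => homTrans R n))) →ₗ[R]
      (↥(PatchS R ℱ M) →ₗ[R] ↥(PatchS R ℱ N)) where
  toFun φ :=
    { toFun := fun x => ⟨fun n => ultraHom R ℱ (φ.1 n) (x.1 n), by
        rw [mem_PatchS]
        intro n
        rw [← ultraHom_compat, x.2 n, φ.2 n]⟩
      map_add' := fun x y => Subtype.ext (funext fun n => map_add _ (x.1 n) (y.1 n))
      map_smul' := fun c x => Subtype.ext (funext fun n => map_smul _ c (x.1 n)) }
  map_add' φ ψ := LinearMap.ext fun x => Subtype.ext (funext fun n =>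
    LinearMap.congr_fun (map_add (ultraHom R ℱ) (φ.1 n) (ψ.1 n)) (x.1 n))
  map_smul' c φ := LinearMap.ext fun x => Subtype.ext (funext fun n =>
    LinearMap.congr_fun (map_smul (ultraHom R ℱ) c (φ.1 n)) (x.1 n))

lemma limToHom_apply {M N : X → Type*} [∀ α, AddCommGroup (M α)] [∀ α, Module R (M α)]
    [∀ α, AddCommGroup (N α)] [∀ α, Module R (N α)]
    (φ : ↥(seqLimit R
        (fun n => Ultraproduct ℱ R (fun α => ModQuot R n (M α) →ₗ[R] ModQuot R n (N α)))
        (fun n => ultraMap ℱ R (fun α => homTrans R n))))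
    (x : ↥(PatchS R ℱ M)) (n : ℕ) :
    (limToHom R ℱ M N φ x).1 n = ultraHom R ℱ (φ.1 n) (x.1 n) := rfl

lemma exists_factor_submodule {V Q S : Type*} [AddCommGroup V] [Module R V]
    (P : Submodule R V) [AddCommGroup Q] [Module R Q]
    [AddCommGroup S] [Module R S] (p : P →ₗ[R] Q) (hp : Function.Surjective p)
    (q : P →ₗ[R] S) (h : LinearMap.ker p ≤ LinearMap.ker q) :
    ∃ f : Q →ₗ[R] S, ∀ x, f (p x) = q x :=
  exists_factor R p hp q h

set_option maxHeartbeats 1000000 in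
lemma patch_factor [IsNoetherianRing R]
    {M N : X → Type*} [∀ α, AddCommGroup (M α)] [∀ α, Module R (M α)]
    [∀ α, AddCommGroup (N α)] [∀ α, Module R (N α)]
    (g : ↥(PatchS R ℱ M) →ₗ[R] ↥(PatchS R ℱ N)) (n : ℕ) :
    ∃ h : UP R ℱ M n →ₗ[R] UP R ℱ N n, ∀ x : ↥(PatchS R ℱ M), h (x.1 n) = (g x).1 n := by
  let evM : ↥(PatchS R ℱ M) →ₗ[R] UP R ℱ M n :=
    (LinearMap.proj n).comp (PatchS R ℱ M).subtype
  let evN : ↥(PatchS R ℱ N) →ₗ[R] UP R ℱ N n :=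
    (LinearMap.proj n).comp (PatchS R ℱ N).subtype
  have evM_surj : Function.Surjective evM := fun u =>
    (exists_patchOf R ℱ n u).imp' (patchOf R ℱ M) fun _ h => h
  have hker : LinearMap.ker evM ≤ LinearMap.ker (evN ∘ₗ g) := by
    intro x hx
    have hx' := patch_ker R ℱ n x hx
    refine Submodule.smul_induction_on hx' ?_ ?_
    · intro r hr y _
      rw [LinearMap.mem_ker, LinearMap.map_smul]
      obtain ⟨w, hw⟩ := Submodule.Quotient.mk_surjective _ ((evN ∘ₗ g) y)
      rw [← hw, ← Submodule.Quotient.mk_smul]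
      have : r • w = 0 := funext fun α => smul_modQuot R n r hr (w α)
      rw [this]
      rfl
    · intro a b ha hb
      exact Submodule.add_mem _ ha hb
  exact exists_factor_submodule R (PatchS R ℱ M) evM evM_surj (evN ∘ₗ g) hker

end Helpers

set_option maxHeartbeats 1000000 in
/-- Let R be a complete Noetherian local ring with finite residue field and
ℱ a non-principal ultrafilter on an infinite set X.  For bounded families (M α), (N α) of
R-modules, the module of homomorphisms between the patching modules is isomorphic to the
inverse limit over n of the ultraproducts of the modules Hom(M α/𝔪ⁿ, N α/𝔪ⁿ). -/
theorem patch_hom_iso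
    (R : Type*) [CommRing R] [IsLocalRing R] [IsNoetherianRing R]
    [IsAdicComplete (IsLocalRing.maximalIdeal R) R] [Finite (IsLocalRing.ResidueField R)]
    {X : Type*} [Infinite X] (ℱ : Ultrafilter X) (hℱ : ∀ x : X, ℱ ≠ pure x)
    (M N : X → Type*) [∀ α, AddCommGroup (M α)] [∀ α, Module R (M α)]
    [∀ α, AddCommGroup (N α)] [∀ α, Module R (N α)]
    (s : ℕ) (hMbdd : ∀ α, ∃ f : (Fin s → R) →ₗ[R] M α, Function.Surjective f)
    (hNbdd : ∀ α, ∃ f : (Fin s → R) →ₗ[R] N α, Function.Surjective f) :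
    Nonempty ((↥(PatchS R ℱ M) →ₗ[R] ↥(PatchS R ℱ N)) ≃ₗ[R]
      ↥(seqLimit R
        (fun n => Ultraproduct ℱ R (fun α => ModQuot R n (M α) →ₗ[R] ModQuot R n (N α)))
        (fun n => ultraMap ℱ R (fun α => homTrans R n)))) := by
  choose fM hfM using hMbdd
  have hp : ∀ n, ∀ α, Function.Surjective ((mPow R n (M α)).mkQ ∘ₗ fM α) := fun n α =>
    (Submodule.mkQ_surjective _).comp (hfM α)
  have hfinite : ∀ n, Finite (R ⧸ maximalIdeal R ^ n) := fun n => by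
    have : Finite (R ⧸ maximalIdeal R) := ‹Finite (IsLocalRing.ResidueField R)›
    exact Ideal.finite_quotient_pow (IsNoetherian.noetherian _) n
  have hinj : ∀ n, Function.Injective (ultraHom R ℱ (M := fun α => ModQuot R n (M α))
      (N := fun α => ModQuot R n (N α))) := fun n => ultraHom_injective R ℱ _ (hp n)
  have hsurj : ∀ n, Function.Surjective (ultraHom R ℱ (M := fun α => ModQuot R n (M α))
      (N := fun α => ModQuot R n (N α))) := fun n => by
    have := hfinite n
    exact ultraHom_surjective R ℱ _ (hp n) (maximalIdeal R ^ n)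
      (fun α r hr x => smul_modQuot R n r hr x) (fun α r hr x => smul_modQuot R n r hr x)
  refine ⟨(LinearEquiv.ofBijective (limToHom R ℱ M N) ⟨?_, ?_⟩).symm⟩
  · intro φ ψ hφ
    refine Subtype.ext (funext fun n => hinj n ?_)
    refine LinearMap.ext fun u => ?_
    obtain ⟨y, rfl⟩ := exists_patchOf R ℱ n u
    rw [← limToHom_apply, hφ, limToHom_apply]
  · intro g
    choose h hh using fun n => patch_factor R ℱ g n
    choose φ hφ using fun n => hsurj n (h n)
    refine ⟨⟨φ, ?_⟩, ?_⟩
    · intro n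
      refine hinj n (LinearMap.ext fun u => ?_)
      obtain ⟨y, rfl⟩ := exists_patchOf R ℱ n u
      generalize patchOf R ℱ M y = x
      rw [hφ, hh]
      conv_lhs => rw [← x.2 n]
      rw [ultraHom_compat, hφ, hh]
      exact (g x).2 n
    · refine LinearMap.ext fun x => Subtype.ext (funext fun n => ?_)
      rw [limToHom_apply, hφ, hh]
end

section
/- Let l₀ ≥ 0 and q₀ be integers and let S be a Cohen–Macaulay Noetherian local ring of dimension n ≥ l₀ with maximal ideal 𝔪_S. Let C• be a bounded cochain complex of finite free S-modules which is not exact, and suppose that H^i(C• ⊗_S S/𝔪_S) is non-zero only when q₀ ≤ i ≤ q₀ + l₀. Then the dimension of the S-module H*(C•) = ⊕_i H^i(C•) (i.e. the Krull dimension of S/Ann_S(H*(C•))) is at least dim S − l₀; and if equality holds, then H^i(C•) is non-zero only for i = q₀ + l₀ and the S-module H^{q₀+l₀}(C•) has projective dimension l₀. -/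
open CategoryTheory TensorProduct

/-- The depth of a module over a Noetherian local ring: the supremum of the lengths of
regular sequences on M consisting of elements of the maximal ideal. -/
noncomputable def seqDepth (S : Type) [CommRing S] [IsLocalRing S]
    (M : Type) [AddCommGroup M] [Module S M] : ℕ∞ :=
  sSup {d : ℕ∞ | ∃ rs : List S, (∀ x ∈ rs, x ∈ IsLocalRing.maximalIdeal S) ∧
    RingTheory.Sequence.IsRegular M rs ∧ (rs.length : ℕ∞) = d}

/-- The i+1-st cohomology of a cochain complex (C, d), as the kernel of d (i+1) modulo the
image of d i. -/
abbrev cxCohomology (S : Type) [CommRing S] (C : ℤ → Type) [∀ i, AddCommGroup (C i)]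
    [∀ i, Module S (C i)] (d : ∀ i : ℤ, C i →ₗ[S] C (i + 1)) (i : ℤ) :=
  ↥(LinearMap.ker (d (i + 1))) ⧸
    Submodule.comap (LinearMap.ker (d (i + 1))).subtype (LinearMap.range (d i))

/-- The module M has projective dimension at most n: it admits a projective resolution which
vanishes in degrees above n. -/
def projDimLE (S : Type) [CommRing S] (M : Type) [AddCommGroup M] [Module S M]
    (n : ℕ) : Prop :=
  ∃ P : ProjectiveResolution (ModuleCat.of S M),
    ∀ i : ℕ, n < i → Limits.IsZero (P.complex.X i)

/-- The module M has projective dimension exactly n. -/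
def projDimEq (S : Type) [CommRing S] (M : Type) [AddCommGroup M] [Module S M]
    (n : ℕ) : Prop :=
  projDimLE S M n ∧ ∀ m : ℕ, projDimLE S M m → n ≤ m


section pdconv
open CategoryTheory Limits Abelian
universe u
variable {A : Type (u+1)} [Category.{u} A] [Abelian A]

lemma hasPD_of_resolution {X : A} [HasExt.{u} A] (P : ProjectiveResolution X) (n : ℕ)
    (h : ∀ i : ℕ, n < i → IsZero (P.complex.X i)) : HasProjectiveDimensionLE X n := by
  refine HasProjectiveDimensionLT.mk ?_
  intro i hi Y e
  obtain ⟨f, hf, rfl⟩ := P.extMk_surjective e (i+1) rfl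
  obtain rfl : f = 0 := (h i (by omega)).eq_of_src _ _
  exact P.extMk_zero (i+1) rfl

lemma exists_resolution_succ {T : ShortComplex A} (hT : T.ShortExact) [Projective T.X₂]
    (Q : ProjectiveResolution T.X₁) :
    ∃ P : ProjectiveResolution T.X₃, ∀ i, P.complex.X (i+1) = Q.complex.X i := by
  have := hT.mono_f
  have := hT.epi_g
  let q : Q.complex.X 0 ⟶ T.X₁ := Q.π.f 0
  have hq : Q.complex.d 1 0 ≫ q = 0 := Q.complex_d_comp_π_f_zero
  have hqe : Epi q := inferInstanceAs (Epi (Q.π.f 0))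
  have hex : (ShortComplex.mk (Q.complex.d 1 0) q hq).Exact :=
    ShortComplex.exact_of_g_is_cokernel _ Q.isColimitCokernelCofork
  have hw : Q.complex.d 1 0 ≫ (q ≫ T.f) = 0 := by
    rw [← Category.assoc, hq, zero_comp]
  let K := ChainComplex.augment Q.complex (q ≫ T.f) hw
  have hK0 : (ShortComplex.mk (q ≫ T.f) T.g (by simp)).Exact := by
    let α : ShortComplex.mk (q ≫ T.f) T.g (by simp) ⟶ T :=
      { τ₁ := q, τ₂ := 𝟙 _, τ₃ := 𝟙 _ }
    have : Epi α.τ₁ := hqe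
    have : IsIso α.τ₂ := inferInstanceAs (IsIso (𝟙 _))
    have : Mono α.τ₃ := inferInstanceAs (Mono (𝟙 _))
    exact (ShortComplex.exact_iff_of_epi_of_isIso_of_mono α).2 hT.exact
  have hK1 : (ShortComplex.mk (Q.complex.d 1 0) (q ≫ T.f) hw).Exact := by
    let α : ShortComplex.mk (Q.complex.d 1 0) q hq ⟶
      ShortComplex.mk (Q.complex.d 1 0) (q ≫ T.f) hw :=
      { τ₁ := 𝟙 _, τ₂ := 𝟙 _, τ₃ := T.f }
    have : Epi α.τ₁ := inferInstanceAs (Epi (𝟙 _))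
    have : IsIso α.τ₂ := inferInstanceAs (IsIso (𝟙 _))
    have : Mono α.τ₃ := inferInstanceAs (Mono T.f)
    exact (ShortComplex.exact_iff_of_epi_of_isIso_of_mono α).1 hex
  have hexact : ∀ n, K.ExactAt (n+1) := by
    intro n
    rw [HomologicalComplex.exactAt_iff' _ (n + 1 + 1) (n + 1) n (by simp) (by simp)]
    cases n with
    | zero => exact hK1
    | succ n => exact Q.exact_succ n
  have hproj : ∀ n, Projective (K.X n) := by
    intro n
    cases n with
    | zero => exact inferInstanceAs (Projective T.X₂)
    | succ n => exact Q.projective n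
  let π : K ⟶ (ChainComplex.single₀ A).obj T.X₃ :=
    (ChainComplex.toSingle₀Equiv K T.X₃).symm ⟨T.g, by
      change (q ≫ T.f) ≫ T.g = 0
      simp⟩
  have hπ0 : π.f 0 = T.g := ChainComplex.toSingle₀Equiv_symm_apply_f_zero _ _
  have hπ : QuasiIso π := ⟨fun n => by
    cases n with
    | zero =>
      rw [ChainComplex.quasiIsoAt₀_iff, ShortComplex.quasiIso_iff_of_zeros']
      · refine (ShortComplex.exact_and_epi_g_iff_of_iso ?_).2 ⟨hK0, by dsimp; infer_instance⟩
        refine ShortComplex.isoMk (Iso.refl _) (Iso.refl _) (Iso.refl _) ?_ ?_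
        · exact (Category.id_comp (q ≫ T.f)).trans (Category.comp_id (q ≫ T.f)).symm
        · exact (Category.id_comp T.g).trans (hπ0.symm.trans (Category.comp_id (π.f 0)).symm)
      all_goals rfl
    | succ n =>
      rw [quasiIsoAt_iff_exactAt']
      · exact hexact n
      · apply ChainComplex.exactAt_succ_single_obj⟩
  exact ⟨{ complex := K, projective := hproj, π := π, quasiIso := hπ }, fun i => rfl⟩

lemma exists_resolution_of_hasPD [EnoughProjectives A] (n : ℕ) (X : A)
    (hX : HasProjectiveDimensionLE X n) :
    ∃ P : ProjectiveResolution X, ∀ i : ℕ, n < i → IsZero (P.complex.X i) := by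
  induction n generalizing X with
  | zero =>
    have : Projective X := (projective_iff_hasProjectiveDimensionLE_zero X).2 hX
    refine ⟨ProjectiveResolution.self X, fun i hi => ?_⟩
    apply HomologicalComplex.isZero_single_obj_X
    omega
  | succ n ih =>
    let T : ShortComplex A := ShortComplex.mk (kernel.ι (Projective.π X)) (Projective.π X) (by simp)
    have hT : T.ShortExact :=
      { exact := ShortComplex.exact_kernel _
        mono_f := inferInstanceAs (Mono (kernel.ι _))
        epi_g := inferInstanceAs (Epi (Projective.π X)) }
    have : Projective T.X₂ := inferInstanceAs (Projective (Projective.over X))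
    obtain ⟨Q, hQ⟩ := ih T.X₁ ((hT.hasProjectiveDimensionLT_X₃_iff n this).1 hX)
    obtain ⟨P, hP⟩ := exists_resolution_succ hT Q
    refine ⟨P, fun i hi => ?_⟩
    obtain ⟨j, rfl⟩ : ∃ j, i = j + 1 := ⟨i - 1, by omega⟩
    rw [hP]
    exact hQ j (by omega)
end pdconv

section depth
open CategoryTheory Limits Abelian RingTheory.Sequence IsLocalRing Pointwise
variable {S : Type} [CommRing S] [IsLocalRing S] [IsNoetherianRing S]

lemma length_le_dim_of_isRegular (rs : List S) :
    ∀ (M : Type) [AddCommGroup M] [Module S M] [Module.Finite S M]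
    (_ : ∀ x ∈ rs, x ∈ maximalIdeal S) (_ : IsRegular M rs)
    (p : Ideal S) [p.IsPrime] (m : M) (_ : m ≠ 0) (_ : ∀ a ∈ p, a • m = 0),
    ((rs.length : ℕ) : WithBot ℕ∞) ≤ ringKrullDim (S ⧸ p) := by
  induction rs with
  | nil =>
    intro M _ _ _ _ _ p _ m hm hp
    simpa using ringKrullDim_nonneg_of_nontrivial
  | cons x rs ih =>
    intro M _ _ _ hmem hreg p hpp m hm hp
    rw [isRegular_cons_iff] at hreg
    obtain ⟨hx, hrs⟩ := hreg
    have hxm : x ∈ maximalIdeal S := hmem x (by simp)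
    let N : Submodule S M := Submodule.torsionBySet S M (p : Set S)
    have hN : ∀ n : M, n ∈ N ↔ ∀ a ∈ p, a • n = 0 := by
      intro n
      simp [N, Submodule.mem_torsionBySet_iff]
    have hNx : ¬ N ≤ x • (⊤ : Submodule S M) := by
      intro hle
      have h1 : N ≤ maximalIdeal S • N := by
        intro n hn
        obtain ⟨m', -, rfl⟩ := (Submodule.mem_smul_pointwise_iff_exists _ _ _).1 (hle hn)
        refine Submodule.smul_mem_smul hxm ?_
        rw [hN] at hn ⊢
        intro a ha
        apply hx
        have := hn a ha
        rw [smul_comm] at this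
        simpa using this
      have h2 : N = ⊥ := Submodule.eq_bot_of_le_smul_of_le_jacobson_bot (maximalIdeal S) N
        (IsNoetherian.noetherian N) h1 (IsLocalRing.maximalIdeal_le_jacobson _)
      have h3 : m ∈ N := (hN m).2 hp
      rw [h2] at h3
      exact hm (by simpa using h3)
    obtain ⟨n, hnN, hnx⟩ := Set.not_subset.1 hNx
    let nb : QuotSMulTop x M := Submodule.Quotient.mk n
    have hnb : nb ≠ 0 := by
      intro h
      exact hnx ((Submodule.Quotient.mk_eq_zero _).1 h)
    obtain ⟨q, hq, hle⟩ := exists_le_isAssociatedPrime_of_isNoetherianRing S nb hnb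
    obtain ⟨hqp, y, hy⟩ := isAssociatedPrime_iff.1 hq
    have hy0 : y ≠ 0 := by
      rintro rfl
      apply hqp.ne_top
      rw [hy]; ext; simp [Submodule.mem_colon_singleton]
    have hpq : p ≤ q := by
      refine le_trans ?_ hle
      intro a ha
      rw [Submodule.mem_colon_singleton, Submodule.mem_bot]
      have : a • n = 0 := (hN n).1 hnN a ha
      change Submodule.Quotient.mk (a • n) = _
      rw [this]; rfl
    have hxq : x ∈ q := by
      apply hle
      rw [Submodule.mem_colon_singleton, Submodule.mem_bot]
      change Submodule.Quotient.mk (x • n) = _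
      rw [Submodule.Quotient.mk_eq_zero]
      exact Submodule.smul_mem_pointwise_smul _ _ _ trivial
    have hxp : x ∉ p := by
      intro h
      apply hm
      apply hx
      simpa using hp x h
    have h1 := ih (QuotSMulTop x M) (fun z hz => hmem z (by simp [hz])) hrs q y hy0 (by
      intro a ha
      rw [hy, Submodule.mem_colon_singleton, Submodule.mem_bot] at ha
      exact ha)
    have h2 : ringKrullDim (S ⧸ q) + 1 ≤ ringKrullDim (S ⧸ p) :=
      ringKrullDim_succ_le_of_surjective (Ideal.Quotient.factor hpq)
        (Ideal.Quotient.factor_surjective hpq) (r := Ideal.Quotient.mk p x)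
        (by
          rw [mem_nonZeroDivisors_iff_ne_zero]
          intro h
          exact hxp (Ideal.Quotient.eq_zero_iff_mem.1 h))
        (by simpa using Ideal.Quotient.eq_zero_iff_mem.2 hxq)
    refine le_trans ?_ h2
    rw [List.length_cons]
    push_cast
    gcongr

lemma ext_residue_subsingleton (rs : List S) (hmem : ∀ x ∈ rs, x ∈ maximalIdeal S)
    (hreg : IsRegular S rs) (r : ℕ) :
    ∀ (M : ModuleCat.{0} S) [Module.Finite S M] (_ : HasProjectiveDimensionLE M r)
    (i : ℕ) (_ : i + r < rs.length),
    Subsingleton (Ext (ModuleCat.of S (ResidueField S)) M i) := by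
  have key : ∀ (M : ModuleCat.{0} S) [Module.Finite S M] [Module.Projective S M]
    (i : ℕ) (_ : i < rs.length),
    Subsingleton (Ext (ModuleCat.of S (ResidueField S)) M i) := by
    intro M _ _ i hi
    rcases subsingleton_or_nontrivial M with hM | hM
    · have hz : IsZero M := ModuleCat.isZero_of_subsingleton M
      refine ⟨fun a b => ?_⟩
      rw [← Ext.comp_mk₀_id a, ← Ext.comp_mk₀_id b, hz.eq_of_src (𝟙 M) 0]
      simp
    · have h1 : IsWeaklyRegular M rs :=
        ((TensorProduct.lid S M).isWeaklyRegular_congr rs).1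
          (hreg.toIsWeaklyRegular.isWeaklyRegular_rTensor (M₂ := M))
      have h2 : IsRegular M rs :=
        (IsLocalRing.isRegular_iff_isWeaklyRegular_of_subset_maximalIdeal hmem).2 h1
      refine ModuleCat.subsingleton_ext_of_exists_isRegular (maximalIdeal S) _ ?_ M ?_ rs hmem h2 i hi
      · rw [Module.support_eq_zeroLocus]
        refine PrimeSpectrum.zeroLocus_anti_mono ?_
        have : Module.annihilator S (S ⧸ maximalIdeal S) = maximalIdeal S := Ideal.annihilator_quotient
        exact this.ge
      · refine lt_top_iff_ne_top.2 (Ne.symm ?_)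
        exact Submodule.top_ne_ideal_smul_of_le_jacobson_annihilator
          (IsLocalRing.maximalIdeal_le_jacobson _)
  induction r with
  | zero =>
    intro M _ hM i hi
    have : Projective M := (projective_iff_hasProjectiveDimensionLE_zero M).2 hM
    have : Module.Projective S M := (IsProjective.iff_projective (R := S) M).2 this
    exact key M i (by omega)
  | succ r ih =>
    intro M _ hM i hi
    rcases Module.exists_finite_presentation S M with ⟨F, _, _, _, _, f, surjf⟩
    let T : ShortComplex (ModuleCat.{0} S) := f.shortComplexKer
    have hT : T.ShortExact := LinearMap.shortExact_shortComplexKer surjf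
    have hp : Projective T.X₂ := inferInstance
    have hX1 : HasProjectiveDimensionLE T.X₁ r := (hT.hasProjectiveDimensionLT_X₃_iff r hp).1 hM
    have : Module.Finite S T.X₁ := inferInstance
    have h1 := ih T.X₁ hX1 (i+1) (by omega)
    have h2 : Subsingleton (Ext (ModuleCat.of S (ResidueField S)) T.X₂ i) := key (ModuleCat.of S F) i (by omega)
    have zero1 := AddCommGrpCat.isZero_of_iff_subsingleton.mpr h2
    have zero2 := AddCommGrpCat.isZero_of_iff_subsingleton.mpr h1
    exact AddCommGrpCat.subsingleton_of_isZero <| ShortComplex.Exact.isZero_of_both_zeros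
        ((Ext.covariant_sequence_exact₃' (ModuleCat.of S (ResidueField S)) hT) i (i + 1) rfl)
        (zero1.eq_zero_of_src _) (zero2.eq_zero_of_tgt _)

/-- Any prime killing a nonzero element of a module of projective dimension at most `r` has
coheight at least `depth S - r`. -/
lemma dim_ge_of_pd (rs : List S) (hmem : ∀ x ∈ rs, x ∈ maximalIdeal S)
    (hreg : IsRegular S rs) (r : ℕ) (M : Type) [AddCommGroup M] [Module S M] [Module.Finite S M]
    (hM : HasProjectiveDimensionLE (ModuleCat.of S M) r)
    (p : Ideal S) [p.IsPrime] (m : M) (hm : m ≠ 0) (hp : ∀ a ∈ p, a • m = 0) :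
    ((rs.length - r : ℕ) : WithBot ℕ∞) ≤ ringKrullDim (S ⧸ p) := by
  have : Nontrivial M := ⟨m, 0, hm⟩
  have hsupp : Module.support S (ResidueField S) = PrimeSpectrum.zeroLocus (maximalIdeal S) := by
    rw [Module.support_eq_zeroLocus]
    have : Module.annihilator S (S ⧸ maximalIdeal S) = maximalIdeal S := Ideal.annihilator_quotient
    exact congrArg (fun I : Ideal S => PrimeSpectrum.zeroLocus (I : Set S)) this
  obtain ⟨rs', hlen, hmem', hreg'⟩ := ModuleCat.exists_isRegular_of_exists_subsingleton_ext
    (maximalIdeal S) (rs.length - r) (ModuleCat.of S M)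
    (lt_top_iff_ne_top.2 (Ne.symm (Submodule.top_ne_ideal_smul_of_le_jacobson_annihilator
          (IsLocalRing.maximalIdeal_le_jacobson _))))
    (ModuleCat.of S (ResidueField S)) hsupp
    (fun i hi => ext_residue_subsingleton rs hmem hreg r (ModuleCat.of S M) hM i (by omega))
  rw [← hlen]
  exact length_le_dim_of_isRegular rs' M hmem' hreg' p m hm hp

lemma exists_prime_of_ne_zero {M : Type} [AddCommGroup M] [Module S M] [Nontrivial M] :
    ∃ p : Ideal S, p.IsPrime ∧ Module.annihilator S M ≤ p ∧ ∃ m : M, m ≠ 0 ∧ ∀ a ∈ p, a • m = 0 := by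
  obtain ⟨x, hx⟩ := exists_ne (0 : M)
  obtain ⟨q, hq, hle⟩ := exists_le_isAssociatedPrime_of_isNoetherianRing S x hx
  obtain ⟨hqp, y, hy⟩ := isAssociatedPrime_iff.1 hq
  refine ⟨q, hqp, ?_, y, ?_, ?_⟩
  · intro a ha
    apply hle
    rw [Submodule.mem_colon_singleton, Submodule.mem_bot]
    exact Module.mem_annihilator.1 ha x
  · rintro rfl
    apply hqp.ne_top
    rw [hy]; ext; simp [Submodule.mem_colon_singleton]
  · intro a ha
    rw [hy, Submodule.mem_colon_singleton, Submodule.mem_bot] at ha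
    exact ha
end depth

section cplx
open CategoryTheory Limits Abelian IsLocalRing
variable {S : Type} [CommRing S] [IsLocalRing S] [IsNoetherianRing S]

lemma bottom_step {A B D : Type} [AddCommGroup A] [AddCommGroup B] [AddCommGroup D]
    [Module S A] [Module S B] [Module S D] [Module.Finite S B] [Module.Finite S D]
    [Module.Free S D] (f : A →ₗ[S] B) (g : B →ₗ[S] D) (hgf : g ∘ₗ f = 0)
    (h : LinearMap.ker (TensorProduct.map g
          (LinearMap.id : ResidueField S →ₗ[S] ResidueField S)) ≤
        LinearMap.range (TensorProduct.map f
          (LinearMap.id : ResidueField S →ₗ[S] ResidueField S))) :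
    LinearMap.ker g ≤ LinearMap.range f ∧ Module.Projective S (D ⧸ LinearMap.range g) := by
  have hle : LinearMap.range f ≤ LinearMap.ker g := LinearMap.range_le_ker_iff.2 hgf
  let l : (B ⧸ LinearMap.range f) →ₗ[S] D := (LinearMap.range f).liftQ g hle
  have hl : l ∘ₗ (LinearMap.range f).mkQ = g := Submodule.liftQ_mkQ _ _ _
  have hinj : Function.Injective (l.rTensor (ResidueField S)) := by
    rw [injective_iff_map_eq_zero]
    intro x hx
    obtain ⟨y, rfl⟩ := LinearMap.rTensor_surjective (ResidueField S)
      (LinearMap.range f).mkQ_surjective x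
    rw [← LinearMap.comp_apply, ← LinearMap.rTensor_comp, hl] at hx
    obtain ⟨z, rfl⟩ := h (LinearMap.mem_ker.2 hx)
    change ((LinearMap.range f).mkQ.rTensor (ResidueField S)) (f.rTensor (ResidueField S) z) = 0
    rw [← LinearMap.comp_apply, ← LinearMap.rTensor_comp, LinearMap.range_mkQ_comp]
    simp
  have hinj' := (LinearMap.lTensor_inj_iff_rTensor_inj (ResidueField S) l).2 hinj
  obtain ⟨l', hl'⟩ := (IsLocalRing.split_injective_iff_lTensor_residueField_injective l).2 hinj'
  have hli : Function.Injective l := Function.LeftInverse.injective (g := l')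
    (fun x => LinearMap.congr_fun hl' x)
  have hr : LinearMap.range l = LinearMap.range g := by
    rw [← hl, LinearMap.range_comp, Submodule.range_mkQ, LinearMap.range_eq_map]
  constructor
  · intro x hx
    have : l ((LinearMap.range f).mkQ x) = 0 := by
      rw [← LinearMap.comp_apply, hl]; exact hx
    rw [map_eq_zero_iff l hli] at this
    exact (Submodule.Quotient.mk_eq_zero _).1 this
  · have hfree : Module.Free S (D ⧸ LinearMap.range g) :=
      Module.free_of_lTensor_residueField_injective l (LinearMap.range g).mkQ
      (Submodule.mkQ_surjective _) (by
        rw [LinearMap.exact_iff, Submodule.ker_mkQ, hr]) hinj'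
    infer_instance

lemma tmul_one_eq_zero {B : Type} [AddCommGroup B] [Module S B] (x : B)
    (h : x ⊗ₜ[S] (1 : ResidueField S) = 0) : x ∈ maximalIdeal S • (⊤ : Submodule S B) := by
  have h1 : (TensorProduct.tensorQuotEquivQuotSMul B (maximalIdeal S))
      (x ⊗ₜ[S] (1 : S ⧸ maximalIdeal S)) = 0 := by
    have h' : x ⊗ₜ[S] (1 : S ⧸ maximalIdeal S) = 0 := h
    rw [h']
    exact map_zero _
  have h2 := TensorProduct.tensorQuotEquivQuotSMul_tmul_mk (maximalIdeal S) x 1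
  rw [map_one, h1, one_smul] at h2
  exact (Submodule.Quotient.mk_eq_zero _).1 h2.symm

lemma top_step {A B D : Type} [AddCommGroup A] [AddCommGroup B] [AddCommGroup D]
    [Module S A] [Module S B] [Module S D] [Module.Finite S B]
    [Module.Free S B] (f : A →ₗ[S] B) (g : B →ₗ[S] D) (hgf : g ∘ₗ f = 0)
    (hpr : Module.Projective S (LinearMap.range g))
    (h : LinearMap.ker (TensorProduct.map g
          (LinearMap.id : ResidueField S →ₗ[S] ResidueField S)) ≤
        LinearMap.range (TensorProduct.map f
          (LinearMap.id : ResidueField S →ₗ[S] ResidueField S))) :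
    LinearMap.ker g ≤ LinearMap.range f ∧ Module.Projective S (LinearMap.range f) := by
  have hle : LinearMap.range f ≤ LinearMap.ker g := LinearMap.range_le_ker_iff.2 hgf
  -- a section of `B → range g`, hence a retraction onto `ker g`
  obtain ⟨s, hs⟩ := Module.projective_lifting_property g.rangeRestrict LinearMap.id
    g.surjective_rangeRestrict
  have hs' : ∀ y, g (s y) = y := fun y => congrArg Subtype.val (LinearMap.congr_fun hs y)
  let r : B →ₗ[S] LinearMap.ker g :=
    (LinearMap.id - s ∘ₗ g.rangeRestrict).codRestrict (LinearMap.ker g) (by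
      intro x
      rw [LinearMap.mem_ker]
      simp [hs'])
  have hr : r ∘ₗ (LinearMap.ker g).subtype = LinearMap.id := by
    ext ⟨x, hx⟩
    have : g.rangeRestrict x = 0 := Subtype.ext hx
    simp [r, this]
  have hkp : Module.Projective S (LinearMap.ker g) := Module.Projective.of_split _ _ hr
  have hkk : LinearMap.ker g ≤ LinearMap.range f := by
    refine Submodule.le_of_le_smul_of_le_jacobson_bot (I := maximalIdeal S)
      (IsNoetherian.noetherian _) (IsLocalRing.maximalIdeal_le_jacobson _) ?_
    intro z hz
    have h0 : z ⊗ₜ[S] (1 : ResidueField S) ∈ LinearMap.ker (TensorProduct.map g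
          (LinearMap.id : ResidueField S →ₗ[S] ResidueField S)) := by
      rw [LinearMap.mem_ker, TensorProduct.map_tmul, LinearMap.mem_ker.1 hz, TensorProduct.zero_tmul]
    obtain ⟨w, hw⟩ := h h0
    obtain ⟨c, rfl⟩ : ∃ c : A, w = c ⊗ₜ[S] (1 : ResidueField S) := by
      clear hw
      induction w using TensorProduct.induction_on with
      | zero => exact ⟨0, by simp⟩
      | tmul a k =>
        obtain ⟨k, rfl⟩ := IsLocalRing.residue_surjective k
        refine ⟨k • a, ?_⟩
        rw [TensorProduct.smul_tmul]
        congr 1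
        rw [Algebra.smul_def, mul_one]
        rfl
      | add x y hx hy =>
        obtain ⟨c, rfl⟩ := hx
        obtain ⟨c', rfl⟩ := hy
        exact ⟨c + c', by rw [TensorProduct.add_tmul]⟩
    rw [TensorProduct.map_tmul, LinearMap.id_apply] at hw
    have h1 : z - f c ∈ maximalIdeal S • (⊤ : Submodule S B) := by
      apply tmul_one_eq_zero
      rw [TensorProduct.sub_tmul, hw, sub_self]
    have h2 : z - f c ∈ LinearMap.ker g := Submodule.sub_mem _ hz (hle ⟨c, rfl⟩)
    have h3 : z - f c ∈ maximalIdeal S • LinearMap.ker g := by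
      have h4 : ((LinearMap.ker g).subtype ∘ₗ r) (z - f c) ∈
          (maximalIdeal S • (⊤ : Submodule S B)).map ((LinearMap.ker g).subtype ∘ₗ r) :=
        Submodule.mem_map_of_mem h1
      have h5 : ((LinearMap.ker g).subtype ∘ₗ r) (z - f c) = z - f c :=
        congrArg Subtype.val (LinearMap.congr_fun hr ⟨z - f c, h2⟩)
      rw [h5, Submodule.map_smul''] at h4
      refine Submodule.smul_mono le_rfl ?_ h4
      rintro _ ⟨y, -, rfl⟩
      exact (r y).2
    have : z = f c + (z - f c) := by abel
    rw [this]
    exact Submodule.add_mem_sup ⟨c, rfl⟩ h3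
  refine ⟨hkk, ?_⟩
  rw [le_antisymm hle hkk]
  exact hkp

lemma shortExact_of {A B D : Type} [AddCommGroup A] [AddCommGroup B] [AddCommGroup D]
    [Module S A] [Module S B] [Module S D] (f : A →ₗ[S] B) (g : B →ₗ[S] D)
    (hf : Function.Injective f) (hg : Function.Surjective g) (hex : Function.Exact f g) :
    (ShortComplex.mk (ModuleCat.ofHom f) (ModuleCat.ofHom g)
      (by ext x; exact hex.apply_apply_eq_zero x)).ShortExact := by
  refine { exact := ?_, mono_f := (ModuleCat.mono_iff_injective _).2 hf,
           epi_g := (ModuleCat.epi_iff_surjective _).2 hg }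
  rw [ShortComplex.ShortExact.moduleCat_exact_iff_function_exact]
  exact hex

variable {C : ℤ → Type} [∀ i, AddCommGroup (C i)] [∀ i, Module S (C i)]
    [∀ i, Module.Free S (C i)] [∀ i, Module.Finite S (C i)]
    {d : ∀ i : ℤ, C i →ₗ[S] C (i + 1)}

lemma subsingleton_cx_iff (i : ℤ) : Subsingleton (cxCohomology S C d i) ↔
    LinearMap.ker (d (i+1)) ≤ LinearMap.range (d i) := by
  rw [Submodule.Quotient.subsingleton_iff, Submodule.comap_subtype_eq_top]

lemma top_part (hdd : ∀ i : ℤ, (d (i + 1)) ∘ₗ (d i) = 0) (b t : ℤ)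
    (hb : ∀ i : ℤ, b < i → Subsingleton (C i))
    (hred : ∀ i : ℤ, t < i + 1 →
      LinearMap.ker (TensorProduct.map (d (i + 1))
          (LinearMap.id : IsLocalRing.ResidueField S →ₗ[S] IsLocalRing.ResidueField S)) ≤
        LinearMap.range (TensorProduct.map (d i)
          (LinearMap.id : IsLocalRing.ResidueField S →ₗ[S] IsLocalRing.ResidueField S)))
    (k : ℕ) : ∀ i : ℤ, b ≤ i + k → t < i + 1 →
      LinearMap.ker (d (i+1)) ≤ LinearMap.range (d i) ∧
        Module.Projective S (LinearMap.range (d i)) := by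
  induction k with
  | zero =>
    intro i hi ht
    have := hb (i+1) (by simp at hi; omega)
    refine ⟨fun x _ => ?_, ?_⟩
    · rw [Subsingleton.elim x 0]; exact Submodule.zero_mem _
    · infer_instance
  | succ k ih =>
    intro i hi ht
    have h := (ih (i+1) (by push_cast at hi; omega) (by omega)).2
    exact top_step (d i) (d (i+1)) (hdd i) h (hred i ht)

lemma pd_part (hdd : ∀ i : ℤ, (d (i + 1)) ∘ₗ (d i) = 0) (q₀ : ℤ)
    (hred : ∀ i : ℤ, i + 1 < q₀ →
      LinearMap.ker (TensorProduct.map (d (i + 1))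
          (LinearMap.id : IsLocalRing.ResidueField S →ₗ[S] IsLocalRing.ResidueField S)) ≤
        LinearMap.range (TensorProduct.map (d i)
          (LinearMap.id : IsLocalRing.ResidueField S →ₗ[S] IsLocalRing.ResidueField S)))
    (e : ℕ) : ∀ i : ℤ, i + 1 ≤ q₀ + e →
      (∀ j < i, LinearMap.ker (d (j+1)) ≤ LinearMap.range (d j)) →
      HasProjectiveDimensionLE (ModuleCat.of S (C (i+1) ⧸ LinearMap.range (d i))) e := by
  induction e with
  | zero =>
    intro i hi _
    obtain ⟨i, rfl⟩ : ∃ i', i = i' + 1 := ⟨i - 1, by omega⟩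
    have := (bottom_step (d i) (d (i+1)) (hdd i) (hred i (by simp at hi; omega))).2
    exact (projective_iff_hasProjectiveDimensionLE_zero _).1
      ((IsProjective.iff_projective (R := S) _).1 this)
  | succ e ih =>
    intro i hi hj
    obtain ⟨i, rfl⟩ : ∃ i', i = i' + 1 := ⟨i - 1, by omega⟩
    have h1 := ih i (by push_cast at hi; omega) (fun j hji => hj j (by omega))
    have hle : LinearMap.range (d i) ≤ LinearMap.ker (d (i+1)) :=
      LinearMap.range_le_ker_iff.2 (hdd i)
    have heq : LinearMap.range (d i) = LinearMap.ker (d (i+1)) := le_antisymm hle (hj i (by omega))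
    have hS := shortExact_of ((LinearMap.range (d i)).liftQ (d (i+1)) hle)
      (LinearMap.range (d (i+1))).mkQ
      (by
        rw [← LinearMap.ker_eq_bot]
        exact Submodule.ker_liftQ_eq_bot _ _ _ heq.ge)
      (Submodule.mkQ_surjective _)
      (by
        rw [LinearMap.exact_iff, Submodule.ker_mkQ, Submodule.range_liftQ])
    have hP : Projective (ModuleCat.of S (C (i+1+1))) := inferInstance
    exact (hS.hasProjectiveDimensionLT_X₃_iff e hP).2 h1

/-- The inclusion of the cohomology into the cokernel. -/
noncomputable def cxIncl (d : ∀ i : ℤ, C i →ₗ[S] C (i + 1)) (i : ℤ) : cxCohomology S C d i →ₗ[S] (C (i+1) ⧸ LinearMap.range (d i)) :=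
  Submodule.mapQ _ _ (LinearMap.ker (d (i+1))).subtype le_rfl

lemma cxIncl_injective (i : ℤ) : Function.Injective (cxIncl d i) := by
  rw [injective_iff_map_eq_zero]
  intro x hx
  obtain ⟨x, rfl⟩ := Submodule.Quotient.mk_surjective _ x
  rw [cxIncl, Submodule.mapQ_apply, Submodule.Quotient.mk_eq_zero] at hx
  exact (Submodule.Quotient.mk_eq_zero _).2 hx

lemma pd_cohomology (hdd : ∀ i : ℤ, (d (i + 1)) ∘ₗ (d i) = 0) (e : ℕ) (i : ℤ)
    (h : HasProjectiveDimensionLE (ModuleCat.of S (C (i+1) ⧸ LinearMap.range (d i))) e)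
    (hp : Module.Projective S (LinearMap.range (d (i+1)))) :
    HasProjectiveDimensionLE (ModuleCat.of S (cxCohomology S C d i)) e := by
  have hle : LinearMap.range (d i) ≤ LinearMap.ker (d (i+1)).rangeRestrict := by
    rw [LinearMap.ker_rangeRestrict]
    exact LinearMap.range_le_ker_iff.2 (hdd i)
  have hS := shortExact_of (cxIncl d i)
      ((LinearMap.range (d i)).liftQ (d (i+1)).rangeRestrict hle) (cxIncl_injective i)
      (by
        rw [← LinearMap.range_eq_top, Submodule.range_liftQ, LinearMap.range_eq_top]
        exact LinearMap.surjective_rangeRestrict _)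
      (by
        intro y
        obtain ⟨y, rfl⟩ := Submodule.Quotient.mk_surjective _ y
        rw [Submodule.liftQ_apply]
        constructor
        · intro hy
          exact ⟨Submodule.Quotient.mk ⟨y, congrArg Subtype.val hy⟩, rfl⟩
        · rintro ⟨x, hx⟩
          obtain ⟨x, rfl⟩ := Submodule.Quotient.mk_surjective _ x
          rw [← Submodule.liftQ_apply (LinearMap.range (d i)) _ (h := hle), ← hx]
          exact Subtype.ext x.2)
  refine hS.hasProjectiveDimensionLT_X₁ _ h ?_
  have hP : Projective (ModuleCat.of S (LinearMap.range (d (i+1)))) := inferInstance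
  exact hasProjectiveDimensionLT_of_ge _ 1 _ (by omega)

end cplx

/-- Let S be a Cohen–Macaulay Noetherian local ring of dimension n ≥ l₀ and
C a bounded, non-exact cochain complex of finite free S-modules whose reduction modulo the
maximal ideal has cohomology concentrated in degrees [q₀, q₀ + l₀].  Then the dimension of the
total cohomology of C is at least dim S − l₀, and in case of equality the cohomology of C is
concentrated in degree q₀ + l₀, where it has projective dimension l₀. -/
theorem cohomology_dimension_bound
    (S : Type) [CommRing S] [IsLocalRing S] [IsNoetherianRing S]
    (l₀ n : ℕ) (q₀ : ℤ) (hln : l₀ ≤ n)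
    (hdim : ringKrullDim S = (n : WithBot (WithTop ℕ)))
    (hCM : seqDepth S S = (n : ℕ∞))
    (C : ℤ → Type) [∀ i, AddCommGroup (C i)] [∀ i, Module S (C i)]
    [∀ i, Module.Free S (C i)] [∀ i, Module.Finite S (C i)]
    (d : ∀ i : ℤ, C i →ₗ[S] C (i + 1))
    (hdd : ∀ i : ℤ, (d (i + 1)) ∘ₗ (d i) = 0)
    (hbdd : ∃ a b : ℤ, ∀ i : ℤ, (i < a ∨ b < i) → Subsingleton (C i))
    (hne : ∃ i : ℤ, Nontrivial (cxCohomology S C d i))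
    (hred : ∀ i : ℤ, (i + 1 < q₀ ∨ q₀ + (l₀ : ℤ) < i + 1) →
      LinearMap.ker (TensorProduct.map (d (i + 1))
          (LinearMap.id : IsLocalRing.ResidueField S →ₗ[S] IsLocalRing.ResidueField S)) ≤
        LinearMap.range (TensorProduct.map (d i)
          (LinearMap.id : IsLocalRing.ResidueField S →ₗ[S] IsLocalRing.ResidueField S))) :
    (((n - l₀ : ℕ) : WithBot (WithTop ℕ)) ≤
        ringKrullDim (S ⧸ ⨅ i : ℤ, Module.annihilator S (cxCohomology S C d i))) ∧
      (ringKrullDim (S ⧸ ⨅ i : ℤ, Module.annihilator S (cxCohomology S C d i)) =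
          ((n - l₀ : ℕ) : WithBot (WithTop ℕ)) →
        (∀ i : ℤ, i + 1 ≠ q₀ + (l₀ : ℤ) → Subsingleton (cxCohomology S C d i)) ∧
          projDimEq S (cxCohomology S C d (q₀ + (l₀ : ℤ) - 1)) l₀) := by
  classical
  obtain ⟨a, b, hab⟩ := hbdd
  -- a maximal regular sequence
  obtain ⟨rs, hmem, hreg, hlen⟩ : ∃ rs : List S, (∀ x ∈ rs, x ∈ IsLocalRing.maximalIdeal S) ∧
      RingTheory.Sequence.IsRegular S rs ∧ rs.length = n := by
    have hne0 : Nonempty {d : ℕ∞ | ∃ rs : List S,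
        (∀ x ∈ rs, x ∈ IsLocalRing.maximalIdeal S) ∧
        RingTheory.Sequence.IsRegular S rs ∧ (rs.length : ℕ∞) = d} :=
      ⟨⟨_, [], by simp, RingTheory.Sequence.IsRegular.nil S S, rfl⟩⟩
    have h := ENat.sSup_mem_of_nonempty_of_lt_top (s := {d : ℕ∞ | ∃ rs : List S,
      (∀ x ∈ rs, x ∈ IsLocalRing.maximalIdeal S) ∧
      RingTheory.Sequence.IsRegular S rs ∧ (rs.length : ℕ∞) = d})
      (by
        change seqDepth S S < ⊤
        rw [hCM]; exact ENat.natCast_lt_top n)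
    obtain ⟨rs, h1, h2, h3⟩ := h
    change _ = seqDepth S S at h3
    rw [hCM] at h3
    exact ⟨rs, h1, h2, by exact_mod_cast h3⟩
  have htop := fun i : ℤ => top_part hdd b (q₀ + l₀) (fun i hi => hab i (Or.inr hi))
    (fun i hi => hred i (Or.inr hi)) (b - i).toNat i (by omega)
  have hbot : ∀ i : ℤ, i + 1 < q₀ → LinearMap.ker (d (i+1)) ≤ LinearMap.range (d i) := fun i hi =>
    (bottom_step (d i) (d (i+1)) (hdd i) (hred i (Or.inl hi))).1
  -- the least degree with nonzero cohomology
  obtain ⟨i₀, hi₀, hmin⟩ := Int.exists_least_of_bdd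
    (P := fun i : ℤ => Nontrivial (cxCohomology S C d i))
    ⟨a - 1, fun z hz => by
      by_contra hlt
      have := hab (z+1) (Or.inl (by omega))
      exact not_subsingleton _ ((subsingleton_cx_iff (d := d) z).2 (fun x _ => by
        rw [Subsingleton.elim x 0]; exact Submodule.zero_mem _))⟩ hne
  have hvan : ∀ j < i₀, LinearMap.ker (d (j+1)) ≤ LinearMap.range (d j) := by
    intro j hj
    rw [← subsingleton_cx_iff]
    by_contra hn
    have := hmin j (not_subsingleton_iff_nontrivial.1 hn)
    omega
  have hle_t : ∀ i : ℤ, Nontrivial (cxCohomology S C d i) → i + 1 ≤ q₀ + l₀ := by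
    intro i hi
    by_contra hlt
    exact not_subsingleton _ ((subsingleton_cx_iff (d := d) i).2 (htop i (by omega)).1)
  have hge_q : q₀ ≤ i₀ + 1 := by
    by_contra hlt
    exact not_subsingleton _ ((subsingleton_cx_iff (d := d) i₀).2 (hbot i₀ (by omega)))
  have hi₀t := hle_t i₀ hi₀
  obtain ⟨e, he⟩ : ∃ e : ℕ, i₀ + 1 = q₀ + e := ⟨(i₀ + 1 - q₀).toNat, by omega⟩
  have hel : e ≤ l₀ := by omega
  have hpdK := pd_part hdd q₀ (fun i hi => hred i (Or.inl hi)) e i₀ he.le hvan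
  obtain ⟨p, hp, hannp, m, hm0, hm⟩ := exists_prime_of_ne_zero (S := S)
    (M := cxCohomology S C d i₀)
  have hpI : ringKrullDim (S ⧸ p) ≤
      ringKrullDim (S ⧸ ⨅ i : ℤ, Module.annihilator S (cxCohomology S C d i)) := by
    have hle : (⨅ i : ℤ, Module.annihilator S (cxCohomology S C d i)) ≤ p :=
      (iInf_le _ i₀).trans hannp
    exact ringKrullDim_le_of_surjective (Ideal.Quotient.factor hle)
      (Ideal.Quotient.factor_surjective hle)
  have hdimp : ((n - e : ℕ) : WithBot ℕ∞) ≤ ringKrullDim (S ⧸ p) := by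
    rw [← hlen]
    refine dim_ge_of_pd rs hmem hreg e _ hpdK p (cxIncl d i₀ m) ?_ ?_
    · rwa [Ne, map_eq_zero_iff _ (cxIncl_injective i₀)]
    · intro a ha
      rw [← map_smul, hm a ha, map_zero]
  refine ⟨le_trans ?_ (hdimp.trans hpI), fun heq => ?_⟩
  · exact Nat.cast_le.2 (by omega)
  · have hle : n - e ≤ n - l₀ := by
      have := (hdimp.trans hpI).trans_eq heq
      exact Nat.cast_le.1 this
    have hel' : e = l₀ := by omega
    subst hel'
    refine ⟨fun i hi => ?_, ?_⟩
    · by_contra hn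
      have hn' := not_subsingleton_iff_nontrivial.1 hn
      have h1 := hmin i hn'
      have h2 := hle_t i hn'
      omega
    · have hidx : q₀ + (e : ℤ) - 1 = i₀ := by omega
      rw [hidx]
      constructor
      · exact exists_resolution_of_hasPD e _
          (pd_cohomology hdd e i₀ hpdK (htop (i₀+1) (by omega)).2)
      · rintro r ⟨P, hP⟩
        have hpd := hasPD_of_resolution P r hP
        have h1 := dim_ge_of_pd rs hmem hreg r _ hpd p m hm0 hm
        rw [hlen] at h1
        have h2 := (h1.trans hpI).trans_eq heq
        have h3 : n - r ≤ n - e := Nat.cast_le.1 h2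
        omega
end

section
/- (Formal implicit function theorem.) Let E be a field of characteristic 0 and R a regular Noetherian local E-algebra. Then for every complete Noetherian local E-algebra T with a nilpotent ideal I ⊆ T and every local E-algebra homomorphism φ : R → T/I, there exists a local E-algebra homomorphism ψ : R → T whose composite with the quotient map T → T/I equals φ. -/
open MvPolynomial in
theorem fift_eval_comp {A B σ : Type*} [CommRing A] [CommRing B] (f : A →+* B) (x : σ → A)
    (F : MvPolynomial σ A) : f (eval x F) = eval (fun i => f (x i)) (map f F) := by
  rw [eval_map]
  exact eval₂_comp_left f (RingHom.id A) x F

open MvPolynomial in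
theorem fift_eval_scale {A σ : Type*} [CommRing A] [Finite σ] {F : MvPolynomial σ A} {n : ℕ}
    (hF : F.IsHomogeneous n) (c : A) (x : σ → A) :
    eval (fun i => c * x i) F = c ^ n * eval x F := by
  cases nonempty_fintype σ
  rw [eval_eq', eval_eq', Finset.mul_sum]
  refine Finset.sum_congr rfl fun d hd => ?_
  have h1 : ∑ i, d i = n := by
    have := hF (mem_support_iff.mp hd)
    rw [← this, ← Finsupp.degree_eq_sum, Finsupp.degree_eq_weight_one]
    rfl
  simp only [mul_pow, Finset.prod_mul_distrib, Finset.prod_pow_eq_pow_sum, h1]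
  ring

open MvPolynomial in
theorem fift_eval_mem {A σ : Type*} [CommRing A] [Finite σ] {F : MvPolynomial σ A} {n : ℕ}
    (hF : F.IsHomogeneous n) (J : Ideal A) (hc : ∀ d, coeff d F ∈ J) (x : σ → A)
    (hx : ∀ i, x i ∈ J) :
    eval x F ∈ J ^ (n + 1) := by
  cases nonempty_fintype σ
  rw [eval_eq']
  refine Ideal.sum_mem _ fun d hd => ?_
  have h1 : ∑ i, d i = n := by
    have := hF (mem_support_iff.mp hd)
    rw [← this, ← Finsupp.degree_eq_sum, Finsupp.degree_eq_weight_one]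
    rfl
  rw [pow_succ', ← h1, ← Finset.prod_pow_eq_pow_sum]
  exact Ideal.mul_mem_mul (hc d) (Ideal.prod_mem_prod fun i _ => Ideal.pow_mem_pow (hx i) _)

theorem fift_smooth (E L : Type*) [Field E] [CharZero E] [CommRing L] [Algebra E L]
    (h : IsField L) : Algebra.FormallySmooth E L := by
  let := h.toField
  obtain ⟨s, hs⟩ := exists_isTranscendenceBasis E L
  have h1 := hs.isAlgebraic_field
  have : CharZero (IntermediateField.adjoin E (Set.range ((↑) : s → L))) :=
    charZero_of_injective_algebraMap (algebraMap E _).injective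
  have h2 : Algebra.IsSeparable (IntermediateField.adjoin E (Set.range ((↑) : s → L))) L :=
    inferInstance
  exact Algebra.FormallySmooth.of_algebraicIndependent_of_isSeparable hs.1

open MvPolynomial IsLocalRing in
theorem fift_analytic {R σ : Type*} [CommRing R] [IsLocalRing R] [IsNoetherianRing R] [Fintype σ]
    [Infinite (R ⧸ maximalIdeal R)]
    (x : σ → R) (hx : Ideal.span (Set.range x) = maximalIdeal R)
    (hd : (Fintype.card σ : WithBot (WithTop ℕ)) = ringKrullDim R)
    {F : MvPolynomial σ R} {n : ℕ} (hF : F.IsHomogeneous n) (h0 : eval x F = 0) :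
    map (Ideal.Quotient.mk (maximalIdeal R)) F = 0 := by
  classical
  by_contra hne
  obtain ⟨a, ha⟩ : ∃ a, eval a (map (Ideal.Quotient.mk (maximalIdeal R)) F) ≠ 0 := by
    by_contra! h
    exact hne (MvPolynomial.funext fun a => by rw [h a, map_zero])
  have hxm : ∀ i, x i ∈ maximalIdeal R := fun i => hx ▸ Ideal.subset_span ⟨i, rfl⟩
  choose b hb using fun i => Ideal.Quotient.mk_surjective (a i)
  obtain ⟨j, hj⟩ : ∃ j, a j ≠ 0 := by
    by_contra! h
    apply ha
    have : a = fun i => Ideal.Quotient.mk (maximalIdeal R) (x i) := by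
      ext i
      rw [h i, Ideal.Quotient.eq_zero_iff_mem.mpr (hxm i)]
    rw [this, ← fift_eval_comp, h0, map_zero]
  have hub : IsUnit (b j) := by
    by_contra h
    exact hj (by rw [← hb j, Ideal.Quotient.eq_zero_iff_mem]; exact h)
  have huF : IsUnit (eval b F) := by
    by_contra h
    apply ha
    have : a = fun i => Ideal.Quotient.mk (maximalIdeal R) (b i) := by
      ext i
      rw [hb i]
    have h3 : Ideal.Quotient.mk (maximalIdeal R) (eval b F) = 0 := by
      rw [Ideal.Quotient.eq_zero_iff_mem]; exact h
    rw [this, ← fift_eval_comp, h3]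
  let y : σ → R := fun i => b j * x i - b i * x j
  let t : Finset R := (Finset.univ.erase j).image y
  let Q := Ideal.span (t : Set R)
  have hyQ : ∀ i, y i ∈ Q := by
    intro i
    by_cases hi : i = j
    · subst hi
      simp [y, mul_comm]
    · exact Ideal.subset_span (by simpa [t] using ⟨i, hi, rfl⟩)
  have key : x j ^ n ∈ Q := by
    have e1 := fift_eval_scale hF (b j) x
    have e2 := fift_eval_scale hF (x j) b
    have e3 : Ideal.Quotient.mk Q (eval (fun i => b j * x i) F) =
        Ideal.Quotient.mk Q (eval (fun i => x j * b i) F) := by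
      have : (fun i => Ideal.Quotient.mk Q (b j * x i)) =
          fun i => Ideal.Quotient.mk Q (x j * b i) := by
        ext i
        rw [Ideal.Quotient.eq, mul_comm (x j)]
        exact hyQ i
      rw [fift_eval_comp, fift_eval_comp, this]
    rw [e1, e2, h0, mul_zero, map_zero, eq_comm, Ideal.Quotient.eq_zero_iff_mem] at e3
    exact (Ideal.mul_unit_mem_iff_mem _ huF).mp e3
  have hrad : maximalIdeal R ≤ Q.radical := by
    rw [← hx, Ideal.span_le]
    rintro _ ⟨i, rfl⟩
    have h1 : b j * x i ∈ Q.radical := by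
      have h2 : x j ∈ Q.radical := ⟨n, key⟩
      have := Ideal.add_mem _ (Ideal.le_radical (hyQ i)) (Ideal.mul_mem_left _ (b i) h2)
      simpa [y] using this
    exact (Ideal.unit_mul_mem_iff_mem _ hub).mp h1
  have hQm : Q ≤ maximalIdeal R := by
    rw [Ideal.span_le]
    intro z hz
    simp only [t, Finset.coe_image, Set.mem_image] at hz
    obtain ⟨i, -, rfl⟩ := hz
    exact Ideal.sub_mem _ (Ideal.mul_mem_left _ _ (hxm i)) (Ideal.mul_mem_left _ _ (hxm j))
  have hmin : maximalIdeal R ∈ Q.minimalPrimes :=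
    ⟨⟨inferInstance, hQm⟩, fun p hp _ => hrad.trans (hp.1.radical_le_iff.mpr hp.2)⟩
  have hh := Ideal.height_le_card_of_mem_minimalPrimes_span_finset hmin
  have hc : t.card < Fintype.card σ :=
    Finset.card_image_le.trans_lt (Finset.card_erase_lt_of_mem (Finset.mem_univ j))
  rw [← maximalIdeal_height_eq_ringKrullDim] at hd
  have hd' : ((Fintype.card σ : ℕ∞)) = (maximalIdeal R).height := by
    exact WithBot.coe_injective hd
  rw [← hd'] at hh
  exact absurd (by exact_mod_cast hh) (not_le.mpr hc)

open MvPolynomial IsLocalRing in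
theorem fift_analytic' {R σ : Type*} [CommRing R] [IsLocalRing R] [IsNoetherianRing R] [Fintype σ]
    [Infinite (R ⧸ maximalIdeal R)]
    (x : σ → R) (hx : Ideal.span (Set.range x) = maximalIdeal R)
    (hd : (Fintype.card σ : WithBot (WithTop ℕ)) = ringKrullDim R)
    {F : MvPolynomial σ R} {n : ℕ} (hF : F.IsHomogeneous n)
    (h0 : eval x F ∈ maximalIdeal R ^ (n + 1)) :
    map (Ideal.Quotient.mk (maximalIdeal R)) F = 0 := by
  have aux : ∀ y ∈ maximalIdeal R * maximalIdeal R ^ n, ∃ G : MvPolynomial σ R,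
      G.IsHomogeneous n ∧ map (Ideal.Quotient.mk (maximalIdeal R)) G = 0 ∧ eval x G = y := by
    intro y hy
    induction hy using Submodule.mul_induction_on' with
    | mem_mul_mem a ha b hb =>
      rw [← hx, Ideal.mem_span_pow_iff_exists_isHomogeneous] at hb
      obtain ⟨p, hp, rfl⟩ := hb
      refine ⟨C a * p, by simpa using (isHomogeneous_C σ a).mul hp, ?_, by simp⟩
      rw [map_mul, map_C, Ideal.Quotient.eq_zero_iff_mem.mpr ha, C_0, zero_mul]
    | add a ha b hb iha ihb =>
      obtain ⟨p, hp, hp', rfl⟩ := iha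
      obtain ⟨q, hq, hq', rfl⟩ := ihb
      exact ⟨p + q, hp.add hq, by simp [hp', hq'], by simp⟩
  rw [pow_succ'] at h0
  obtain ⟨G, hG, hG', hG''⟩ := aux _ h0
  have := fift_analytic x hx hd (hF.sub hG) (by simp [hG''])
  rwa [map_sub, hG', sub_zero] at this

open MvPolynomial in
theorem fift_lift {A B σ : Type*} [CommRing A] [CommRing B] (f : A →+* B)
    (hf : Function.Surjective f) {n : ℕ} {P : MvPolynomial σ B} (hP : P.IsHomogeneous n) :
    ∃ F : MvPolynomial σ A, F.IsHomogeneous n ∧ map f F = P := by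
  obtain ⟨F, rfl⟩ := map_surjective f hf P
  refine ⟨homogeneousComponent n F, homogeneousComponent_isHomogeneous n F, ?_⟩
  ext d
  rw [coeff_map, coeff_homogeneousComponent, coeff_map]
  split_ifs with h
  · rfl
  · rw [map_zero, eq_comm, ← coeff_map]
    exact hP.coeff_eq_zero h

open MvPolynomial IsLocalRing in
theorem fift_ker {R σ : Type*} [CommRing R] [IsLocalRing R] [IsNoetherianRing R] [Fintype σ]
    [Infinite (R ⧸ maximalIdeal R)]
    (x : σ → R) (hx : Ideal.span (Set.range x) = maximalIdeal R)
    (hd : (Fintype.card σ : WithBot (WithTop ℕ)) = ringKrullDim R)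
    (g : ∀ N : ℕ, MvPolynomial σ (R ⧸ maximalIdeal R) →+* R ⧸ maximalIdeal R ^ N)
    (hgX : ∀ N i, g N (X i) = Ideal.Quotient.mk _ (x i))
    (hg1 : ∀ N p, Ideal.Quotient.factor (Ideal.pow_le_self (Nat.succ_ne_zero N)) (g (N + 1) p) =
      constantCoeff p)
    (hg : ∀ N p, Ideal.Quotient.factor (Ideal.pow_le_pow_right (Nat.le_succ N)) (g (N + 1) p) =
      g N p) (N : ℕ) (p) (hp : g N p = 0) :
    p ∈ Ideal.span (Set.range (X : σ → MvPolynomial σ (R ⧸ maximalIdeal R))) ^ N := by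
  induction N with
  | zero => simp
  | succ N ih =>
    have h1 := ih (by rw [← hg, hp, map_zero])
    rw [Ideal.mem_span_pow_iff_exists_isHomogeneous] at h1
    obtain ⟨H, hH, rfl⟩ := h1
    obtain ⟨F, hF, hFH⟩ := fift_lift (Ideal.Quotient.mk (maximalIdeal R ^ (N + 1)))
      Ideal.Quotient.mk_surjective (hH.map (g (N + 1)))
    have h2 : eval x F ∈ maximalIdeal R ^ (N + 1) := by
      rw [← Ideal.Quotient.eq_zero_iff_mem, fift_eval_comp, hFH, ← hp, fift_eval_comp]
      simp only [hgX]
    have h3 := fift_analytic' x hx hd hF h2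
    refine fift_eval_mem hH _ (fun d => ?_) _ fun i => Ideal.subset_span ⟨i, rfl⟩
    have h4 : constantCoeff (coeff d H) = 0 := by
      have h5 := congrArg (coeff d) hFH
      have h6 := congrArg (coeff d) h3
      rw [coeff_map, coeff_map] at h5
      rw [coeff_map, coeff_zero] at h6
      rw [← hg1 N, ← h5, Ideal.Quotient.factor_mk, h6]
    have h7 : coeff d H ∈ idealOfVars σ (R ⧸ maximalIdeal R) ^ 1 := by
      rw [mem_pow_idealOfVars_iff']
      intro e he
      rw [Nat.lt_one_iff, Finsupp.degree_eq_zero_iff] at he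
      rw [he, ← constantCoeff_eq, h4]
    rwa [pow_one] at h7

theorem fift_surj {A B : Type*} [CommRing A] [CommRing B] (g : A →+* B) (J : Ideal A)
    (h : ∀ b, ∃ a, b - g a ∈ J.map g) (N : ℕ) (hN : J.map g ^ N = ⊥) :
    Function.Surjective g := by
  have key : ∀ n, ∀ b, ∃ a, b - g a ∈ J.map g ^ n := by
    intro n
    induction n with
    | zero => intro b; exact ⟨0, by simp⟩
    | succ n ih =>
      have aux : ∀ y ∈ Ideal.span (g '' (J ^ n : Ideal A)), ∃ a ∈ J ^ n,
          y - g a ∈ J.map g ^ (n + 1) := by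
        intro y hy
        induction hy using Submodule.span_induction with
        | mem y hy =>
          obtain ⟨a, ha, rfl⟩ := hy
          exact ⟨a, ha, by simp⟩
        | zero => exact ⟨0, by simp, by simp⟩
        | add y z _ _ hy hz =>
          obtain ⟨a, ha, hy⟩ := hy
          obtain ⟨c, hc, hz⟩ := hz
          refine ⟨a + c, Ideal.add_mem _ ha hc, ?_⟩
          have := Ideal.add_mem _ hy hz
          rw [map_add]
          convert this using 1
          ring
        | smul b y _ hy =>
          obtain ⟨a, ha, hy⟩ := hy
          obtain ⟨c, hc⟩ := h b
          refine ⟨c * a, Ideal.mul_mem_left _ _ ha, ?_⟩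
          have h1 : (b - g c) * g a ∈ J.map g ^ (n + 1) := by
            rw [pow_succ', ← Ideal.map_pow]
            exact Ideal.mul_mem_mul hc (Ideal.mem_map_of_mem g ha)
          have := Ideal.add_mem _ (Ideal.mul_mem_left _ b hy) h1
          rw [map_mul, smul_eq_mul]
          convert this using 1
          ring
      intro b
      obtain ⟨a, ha⟩ := ih b
      rw [← Ideal.map_pow] at ha
      obtain ⟨c, -, hc⟩ := aux _ ha
      exact ⟨a + c, by rw [map_add, ← sub_sub]; exact hc⟩
  intro b
  obtain ⟨a, ha⟩ := key N b
  rw [hN, Ideal.mem_bot, sub_eq_zero] at ha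
  exact ⟨a, ha.symm⟩

theorem fift_complete {T : Type*} [CommRing T] (m : Ideal T) [IsNoetherianRing T] [IsLocalRing T]
    (hm : m ≠ ⊤) [IsAdicComplete m T] (I : Ideal T) :
    IsAdicComplete (m.map (Ideal.Quotient.mk I)) (T ⧸ I) := by
  have : IsAdicComplete m (T ⧸ I) := by
    rw [← AdicCompletion.of_bijective_iff]
    refine ⟨?_, ?_⟩
    · rw [AdicCompletion.of_injective_iff]
      exact IsHausdorff.of_isLocalRing m _ hm
    · intro y
      obtain ⟨z, rfl⟩ := AdicCompletion.map_surjective m (f := I.mkQ) I.mkQ_surjective y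
      obtain ⟨t, rfl⟩ := (AdicCompletion.of_bijective_iff.mpr ‹_›).2 z
      exact ⟨I.mkQ t, (AdicCompletion.map_of m I.mkQ t).symm⟩
  exact (IsAdicComplete.map_algebraMap_iff (S := T ⧸ I) m (T ⧸ I)).mpr this

theorem fift_glue {A R T : Type*} [CommRing A] [CommRing R] [CommRing T] (mR : Ideal R)
    (mT : Ideal T) [IsAdicComplete mT T] (g : ∀ N : ℕ, A →+* R ⧸ mR ^ N)
    (hs : ∀ N, Function.Surjective (g N))
    (hg : ∀ {M N : ℕ} (h : M ≤ N), (Ideal.Quotient.factorPow mR h).comp (g N) = g M)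
    (h : A →+* T) (hh : ∀ N a, g N a = 0 → h a ∈ mT ^ N) :
    ∃ ψ : R →+* T, ∀ n a r, g n a = Ideal.Quotient.mk (mR ^ n) r →
      Ideal.Quotient.mk (mT ^ n) (ψ r) = Ideal.Quotient.mk (mT ^ n) (h a) := by
  let l : ∀ N, R ⧸ mR ^ N →+* T ⧸ mT ^ N := fun N =>
    (g N).liftOfSurjective (hs N) ⟨(Ideal.Quotient.mk (mT ^ N)).comp h, fun a ha => by
      rw [RingHom.mem_ker] at ha ⊢
      exact Ideal.Quotient.eq_zero_iff_mem.mpr (hh N a ha)⟩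
  have hl : ∀ N a, l N (g N a) = Ideal.Quotient.mk (mT ^ N) (h a) := fun N a =>
    (g N).liftOfSurjective_comp_apply (hs N) _ a
  let f : ∀ N, R →+* T ⧸ mT ^ N := fun N => (l N).comp (Ideal.Quotient.mk (mR ^ N))
  have hf : ∀ {M N : ℕ} (h : M ≤ N), (Ideal.Quotient.factorPow mT h).comp (f N) = f M := by
    intro M N hMN
    ext r
    obtain ⟨a, ha⟩ := hs N (Ideal.Quotient.mk _ r)
    have h2 : g M a = Ideal.Quotient.mk _ r := by
      rw [← hg hMN, RingHom.comp_apply, ha]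
      rfl
    simp only [f, RingHom.comp_apply]
    rw [← ha, ← h2, hl, hl]
    rfl
  refine ⟨IsAdicComplete.liftRingHom mT f hf, fun n a r har => ?_⟩
  rw [IsAdicComplete.mk_liftRingHom, ← hl, har]
  rfl

theorem formal_implicit_function_theorem
    (E : Type*) [Field E] [CharZero E]
    (R : Type*) [CommRing R] [IsLocalRing R] [IsNoetherianRing R] [Algebra E R]
    (hreg : ∃ s : Finset R, Ideal.span (s : Set R) = IsLocalRing.maximalIdeal R ∧
      (s.card : WithBot (WithTop ℕ)) = ringKrullDim R)
    (T : Type*) [CommRing T] [IsLocalRing T] [IsNoetherianRing T] [Algebra E T]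
    [IsAdicComplete (IsLocalRing.maximalIdeal T) T]
    (I : Ideal T) (hI : ∃ n : ℕ, I ^ n = ⊥)
    (φ : R →ₐ[E] T ⧸ I) (hφ : IsLocalHom φ.toRingHom) :
    ∃ ψ : R →ₐ[E] T, IsLocalHom ψ.toRingHom ∧
      (Ideal.Quotient.mkₐ E I).comp ψ = φ := by
  classical
  obtain ⟨s, hs, hd⟩ := hreg
  let m := IsLocalRing.maximalIdeal R
  let mT := IsLocalRing.maximalIdeal T
  let J : Ideal (T ⧸ I) := mT.map (Ideal.Quotient.mk I)
  let x : s → R := Subtype.val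
  have hx : Ideal.span (Set.range x) = m := by
    simp only [x, Subtype.range_coe_subtype]
    exact hs
  have hd' : (Fintype.card s : WithBot (WithTop ℕ)) = ringKrullDim R := by
    rw [Fintype.card_coe]; exact hd
  have hxm : ∀ i, x i ∈ m := fun i => hx ▸ Ideal.subset_span ⟨i, rfl⟩
  have hfield : IsField (R ⧸ m) :=
    (Ideal.Quotient.maximal_ideal_iff_isField_quotient m).mp inferInstance
  have hsm : Algebra.FormallySmooth E (R ⧸ m) := fift_smooth E _ hfield
  have : Nontrivial (R ⧸ m) := hfield.nontrivial
  have hinf : Infinite (R ⧸ m) := by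
    have : Infinite E := inferInstance
    exact Infinite.of_injective _ (algebraMap E (R ⧸ m)).injective
  have hJ : IsAdicComplete J (T ⧸ I) :=
    fift_complete mT (IsLocalRing.maximalIdeal.isMaximal T).ne_top I
  have hφm : ∀ r ∈ m, ∃ t ∈ mT, Ideal.Quotient.mk I t = φ r := by
    intro r hr
    obtain ⟨t, ht⟩ := Ideal.Quotient.mk_surjective (φ r)
    refine ⟨t, ?_, ht⟩
    by_contra h
    have hu : IsUnit t := by
      by_contra h'
      exact h h'
    have h2 : IsUnit (φ.toRingHom r) := by
      have := hu.map (Ideal.Quotient.mk I)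
      rw [ht] at this
      exact this
    exact hr (hφ.map_nonunit r h2)
  have hmJ : m ≤ J.comap φ.toRingHom := by
    intro r hr
    obtain ⟨t, ht, h⟩ := hφm r hr
    change φ r ∈ J
    rw [← h]
    exact Ideal.mem_map_of_mem _ ht
  have hmJn : ∀ n, m ^ n ≤ (J ^ n).comap φ.toRingHom := fun n =>
    (Ideal.pow_right_mono hmJ n).trans (Ideal.le_comap_pow _ n)
  obtain ⟨κ, hκ⟩ := Algebra.FormallySmooth.exists_adicCompletionEvalOneₐ_comp_eq
    (I := m) (AlgHom.id E (R ⧸ m))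
  -- the map from the completion of R to T / I
  let φn : ∀ n, R ⧸ m ^ n →+* (T ⧸ I) ⧸ J ^ n := fun n =>
    Ideal.quotientMap (J ^ n) φ.toRingHom (hmJn n)
  let ev : ∀ n, AdicCompletion m R →+* R ⧸ m ^ n := fun n => (AdicCompletion.evalₐ m n).toRingHom
  have hev : ∀ {M N : ℕ} (h : M ≤ N), (Ideal.Quotient.factorPow m h).comp (ev N) = ev M := by
    intro M N h
    ext z
    induction z using AdicCompletion.induction_on with
    | _ z =>
      simp only [ev, RingHom.comp_apply, AlgHom.toRingHom_eq_coe, RingHom.coe_coe,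
        AdicCompletion.evalₐ_mk]
      exact AdicCompletion.Ideal.mk_eq_mk m h z
  have hevof : ∀ n r, ev n (algebraMap R _ r) = Ideal.Quotient.mk (m ^ n) r := fun n r =>
    (AdicCompletion.evalₐ m n).commutes r
  let f : ∀ n, AdicCompletion m R →+* (T ⧸ I) ⧸ J ^ n := fun n => (φn n).comp (ev n)
  have hf : ∀ {M N : ℕ} (h : M ≤ N), (Ideal.Quotient.factorPow J h).comp (f N) = f M := by
    intro M N h
    ext z
    simp only [f, RingHom.comp_apply]
    rw [← hev h, RingHom.comp_apply]
    obtain ⟨r, hr⟩ := Ideal.Quotient.mk_surjective (ev N z)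
    rw [← hr]
    rfl
  let Φ : AdicCompletion m R →+* T ⧸ I := IsAdicComplete.liftRingHom J f hf
  have hΦ : ∀ n z, Ideal.Quotient.mk (J ^ n) (Φ z) = φn n (ev n z) := fun n z =>
    IsAdicComplete.mk_liftRingHom J f hf n z
  have hΦof : ∀ r, Φ (algebraMap R _ r) = φ r := by
    intro r
    refine congrFun (IsHausdorff.funext' J (f := fun r => Φ (algebraMap R _ r)) (g := φ)
      fun n r => ?_) r
    rw [hΦ, hevof]
    rfl
  -- lift of the coefficient field
  let κ' : R ⧸ m →ₐ[E] T ⧸ I :=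
    { Φ.comp κ.toRingHom with
      commutes' := fun e => by
        change Φ (κ (algebraMap E _ e)) = _
        rw [κ.commutes, IsScalarTower.algebraMap_apply E R (AdicCompletion m R), hΦof, φ.commutes] }
  let lam : R ⧸ m →ₐ[E] T := Algebra.FormallySmooth.lift I hI κ'
  have hlam : ∀ c, Ideal.Quotient.mk I (lam c) = Φ (κ c) := fun c =>
    Algebra.FormallySmooth.mk_lift I hI κ' c
  choose t ht htx using fun i => hφm (x i) (hxm i)
  let A := MvPolynomial s (R ⧸ m)
  let γ : A →+* AdicCompletion m R :=
    MvPolynomial.eval₂Hom κ.toRingHom (fun i => algebraMap R _ (x i))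
  let h : A →+* T := MvPolynomial.eval₂Hom lam.toRingHom t
  have hγC : ∀ c, γ (MvPolynomial.C c) = κ c := fun c => MvPolynomial.eval₂Hom_C _ _ _
  have hγX : ∀ i, γ (MvPolynomial.X i) = algebraMap R _ (x i) :=
    fun i => MvPolynomial.eval₂Hom_X' _ _ _
  have hhC : ∀ c, h (MvPolynomial.C c) = lam c := fun c => MvPolynomial.eval₂Hom_C _ _ _
  have hhX : ∀ i, h (MvPolynomial.X i) = t i := fun i => MvPolynomial.eval₂Hom_X' _ _ _
  have hcomp : ∀ a, Ideal.Quotient.mk I (h a) = Φ (γ a) := by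
    intro a
    have : (Ideal.Quotient.mk I).comp h = Φ.comp γ := by
      apply MvPolynomial.ringHom_ext
      · intro c
        rw [RingHom.comp_apply, RingHom.comp_apply, hhC, hγC, hlam]
      · intro i
        rw [RingHom.comp_apply, RingHom.comp_apply, hhX, hγX, htx, hΦof]
    exact RingHom.congr_fun this a
  let g : ∀ N, A →+* R ⧸ m ^ N := fun N => (ev N).comp γ
  have hgX : ∀ N i, g N (MvPolynomial.X i) = Ideal.Quotient.mk _ (x i) := by
    intro N i
    simp only [g, RingHom.comp_apply, hγX, hevof]
  have hev1 : ∀ N z, Ideal.Quotient.factor (Ideal.pow_le_self (Nat.succ_ne_zero N))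
      (ev (N + 1) z) = AdicCompletion.evalOneₐ m z := by
    intro N z
    have h1 := RingHom.congr_fun (hev (Nat.succ_le_succ (Nat.zero_le N))) z
    have h2 := AdicCompletion.factorₐ_evalₐ_one m z
    rw [← h2]
    change _ = Ideal.Quotient.factor _ (ev 1 z)
    rw [← h1, RingHom.comp_apply]
    obtain ⟨r, hr⟩ := Ideal.Quotient.mk_surjective (ev (N + 1) z)
    rw [← hr]
    rfl
  have hg1 : ∀ N p, Ideal.Quotient.factor (Ideal.pow_le_self (Nat.succ_ne_zero N))
      (g (N + 1) p) = MvPolynomial.constantCoeff p := by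
    intro N p
    have : (Ideal.Quotient.factor (Ideal.pow_le_self (I := m) (Nat.succ_ne_zero N))).comp
        (g (N + 1)) = MvPolynomial.constantCoeff := by
      apply MvPolynomial.ringHom_ext
      · intro c
        rw [RingHom.comp_apply, MvPolynomial.constantCoeff_C]
        simp only [g, RingHom.comp_apply]
        rw [hev1, hγC]
        exact AlgHom.congr_fun hκ c
      · intro i
        rw [RingHom.comp_apply, hgX, MvPolynomial.constantCoeff_X, Ideal.Quotient.factor_mk,
          Ideal.Quotient.eq_zero_iff_mem]
        exact hxm i
    exact RingHom.congr_fun this p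
  have hg : ∀ {M N : ℕ} (h : M ≤ N), (Ideal.Quotient.factorPow m h).comp (g N) = g M := by
    intro M N h
    simp only [g]
    rw [← RingHom.comp_assoc, hev]
  let JA : Ideal A := Ideal.span (Set.range MvPolynomial.X)
  have hker : ∀ N p, g N p = 0 → p ∈ JA ^ N := fun N p hp =>
    fift_ker x hx hd' g hgX hg1 (fun N p => RingHom.congr_fun (hg (Nat.le_succ N)) p) N p hp
  have hJAm : ∀ N, JA.map (g N) = m.map (Ideal.Quotient.mk (m ^ N)) := by
    intro N
    have h1 := congrArg (Ideal.map (Ideal.Quotient.mk (m ^ N))) hx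
    rw [← h1, Ideal.map_span, Ideal.map_span, ← Set.range_comp, ← Set.range_comp]
    congr 1
    congr 1
    ext i
    exact hgX N i
  have hsurj : ∀ N, Function.Surjective (g N) := by
    intro N
    have hz : JA.map (g N) ^ N = ⊥ := by
      rw [hJAm, ← Ideal.map_pow, Ideal.map_quotient_self]
    rcases N with _ | N
    · have : Subsingleton (R ⧸ m ^ 0) := by simp
      exact fun b => ⟨0, Subsingleton.elim _ _⟩
    refine fift_surj (g (N + 1)) JA (fun b => ?_) (N + 1) hz
    obtain ⟨r, rfl⟩ := Ideal.Quotient.mk_surjective b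
    refine ⟨MvPolynomial.C (Ideal.Quotient.mk m r), ?_⟩
    obtain ⟨r', hr'⟩ := Ideal.Quotient.mk_surjective
      (g (N + 1) (MvPolynomial.C (Ideal.Quotient.mk m r)))
    have h1 := hg1 N (MvPolynomial.C (Ideal.Quotient.mk m r))
    rw [← hr', MvPolynomial.constantCoeff_C, Ideal.Quotient.factor_mk, Ideal.Quotient.eq] at h1
    rw [← hr', hJAm, ← map_sub]
    refine Ideal.mem_map_of_mem _ ?_
    rw [← neg_sub]
    exact neg_mem h1
  have hJAT : JA ≤ mT.comap h := by
    rw [Ideal.span_le]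
    rintro _ ⟨i, rfl⟩
    change h _ ∈ mT
    rw [hhX]
    exact ht i
  have hh : ∀ N a, g N a = 0 → h a ∈ mT ^ N := fun N a ha =>
    ((Ideal.pow_right_mono hJAT N).trans (Ideal.le_comap_pow _ N)) (hker N a ha)
  obtain ⟨ψ, hψ⟩ := fift_glue m mT g hsurj hg h hh
  have hψφ : ∀ r, Ideal.Quotient.mk I (ψ r) = φ r := by
    intro r
    refine congrFun (IsHausdorff.funext' J (f := fun r => Ideal.Quotient.mk I (ψ r)) (g := φ)
      fun n r => ?_) r
    obtain ⟨a, ha⟩ := hsurj n (Ideal.Quotient.mk _ r)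
    have h1 := hψ n a r ha
    have h2 : Ideal.Quotient.mk (J ^ n) (Ideal.Quotient.mk I (ψ r)) =
        Ideal.Quotient.mk (J ^ n) (Ideal.Quotient.mk I (h a)) := by
      rw [Ideal.Quotient.eq] at h1 ⊢
      rw [← map_sub, ← Ideal.map_pow]
      exact Ideal.mem_map_of_mem _ h1
    rw [h2, hcomp, hΦ]
    change φn n (g n a) = _
    rw [ha]
    rfl
  have hψE : ∀ e : E, ψ (algebraMap E R e) = algebraMap E T e := by
    intro e
    refine congrFun (IsHausdorff.funext' mT (f := fun e => ψ (algebraMap E R e))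
      (g := algebraMap E T) fun n e => ?_) e
    rw [hψ n (MvPolynomial.C (algebraMap E _ e)), hhC, lam.commutes]
    simp only [g, RingHom.comp_apply]
    rw [hγC, κ.commutes, IsScalarTower.algebraMap_apply E R (AdicCompletion m R), hevof]
  refine ⟨{ ψ with commutes' := hψE }, ⟨fun r hr => ?_⟩, ?_⟩
  · apply hφ.map_nonunit
    change IsUnit (φ r)
    rw [← hψφ]
    exact IsUnit.map (Ideal.Quotient.mk I) hr
  · ext r
    exact hψφ r
end
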